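/- Let R be a Noetherian ring such that R/√(0) contains a field. Then every module-finite extension S of R (an injective ring homomorphism R → S with S finitely generated as an R-module) is a robust R-algebra. Consequently, for every ideal I of R and every module-finite extension S of R, the contraction IS ∩ R is contained in the robust closure of I. -/

import Mathlib

set_option synthInstance.maxHeartbeats 1000000
set_option maxHeartbeats 1000000
open scoped BigOperators ENNReal TensorProduct

universe u

/-- A filtration of `M` of length `h` whose factors are cyclic modules killed by `J`. -/
def HasQLFiltration (S : Type u) [CommRing S] (J : Ideal S)
    (M : Type u) [AddCommGroup M] [Module S M] (h : ℕ) : Prop :=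
  ∃ c : Fin (h + 1) → Submodule S M,
    Monotone c ∧ c 0 = ⊥ ∧ c (Fin.last h) = ⊤ ∧
    ∀ i : Fin h,
      (∃ m : M, c i.succ = c i.castSucc ⊔ Submodule.span S {m}) ∧
      ∀ a ∈ J, ∀ x ∈ c i.succ, a • x ∈ c i.castSucc

/-- The `J`-quasilength of `M`. -/
noncomputable def quasilength (S : Type u) [CommRing S] (J : Ideal S)
    (M : Type u) [AddCommGroup M] [Module S M] : ℕ∞ :=
  sInf {n : ℕ∞ | ∃ h : ℕ, n = (h : ℕ∞) ∧ HasQLFiltration S J M h}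

/-- `x₁, …, x_d` is a Q-sequence in `S`. -/
def IsQSequence {d : ℕ} {S : Type u} [CommRing S] (x : Fin d → S) : Prop :=
  Ideal.span (Set.range x) ≠ ⊤ ∧
  ∀ t : ℕ, 0 < t →
    ((t : ℕ∞) ^ d) ≤ quasilength S (Ideal.span (Set.range x))
      (S ⧸ Ideal.span (Set.range fun i => x i ^ t))

/-- `T` is a robust algebra over the (complete local domain) `D`: the image in `T`
of every system of parameters of `D` is a Q-sequence in `T`. -/
def IsRobustOver (D : Type u) [CommRing D] (T : Type u) [CommRing T] [Algebra D T] : Prop :=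
  ∀ (d : ℕ) (x : Fin d → D), ringKrullDim D = d →
    (Ideal.span (Set.range x)).radical.IsMaximal →
    IsQSequence (fun i => algebraMap D T (x i))

/-- `D` is a complete local domain of `R`, i.e. `D ≅ (R_m)^∧ / q` (compatibly with the
structure maps) for some maximal ideal `m` of `R` and minimal prime `q` of `(R_m)^∧`. -/
def IsCompleteLocalDomainOf (R : Type u) [CommRing R] (D : Type u) [CommRing D]
    [Algebra R D] : Prop :=
  ∃ (m : Ideal R) (hm : m.IsMaximal),
    haveI : m.IsPrime := hm.isPrime
    ∃ q ∈ minimalPrimes (AdicCompletion (IsLocalRing.maximalIdeal (Localization.AtPrime m))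
        (Localization.AtPrime m)),
      ∃ e : D ≃+* (AdicCompletion (IsLocalRing.maximalIdeal (Localization.AtPrime m))
          (Localization.AtPrime m) ⧸ q),
        ∀ r : R, e (algebraMap R D r) =
          Ideal.Quotient.mk q (algebraMap (Localization.AtPrime m)
            (AdicCompletion (IsLocalRing.maximalIdeal (Localization.AtPrime m))
              (Localization.AtPrime m)) (algebraMap R (Localization.AtPrime m) r))

/-- `T` is a robust `R`-algebra: `D ⊗_R T` is robust over `D` for every complete
local domain `D` of `R`. -/
def IsRobustAlgebra (R : Type u) [CommRing R] (T : Type u) [CommRing T] [Algebra R T] : Prop :=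
  ∀ (D : Type u) [CommRing D] [Algebra R D], IsCompleteLocalDomainOf R D →
    IsRobustOver D (D ⊗[R] T)

/-- `S` is a forcing algebra for `(M, N, u)`. -/
def IsForcingAlgebra (D : Type u) [CommRing D] (M : Type u) [AddCommGroup M] [Module D M]
    (N : Submodule D M) (u : M) (S : Type u) [CommRing S] [Algebra D S] : Prop :=
  (1 : S) ⊗ₜ[D] u ∈ N.baseChange S

/-- The immediate robust closure `N^▫` of `N` in `M` (over a complete local domain `D`):
the submodule generated by `N` and all `u` admitting a robust forcing algebra. -/
noncomputable def immediateRobustClosure (D : Type u) [CommRing D] (M : Type u)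
    [AddCommGroup M] [Module D M] (N : Submodule D M) : Submodule D M :=
  N ⊔ Submodule.span D {u : M |
    ∃ (S : Type u) (_ : CommRing S) (_ : Algebra D S),
      IsForcingAlgebra D M N u S ∧ IsRobustOver D S}

/-- The robust closure of `N` in `M` over a complete local domain `D`:
the (stabilizing) union of the iterated immediate robust closures `N^(j)`. -/
noncomputable def robustClosureCLD (D : Type u) [CommRing D] (M : Type u)
    [AddCommGroup M] [Module D M] (N : Submodule D M) : Submodule D M :=
  ⨆ j : ℕ, (immediateRobustClosure D M)^[j] N

/-- `u` lies in the robust closure of `N` in `M` over the Noetherian ring `R`: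
for every complete local domain `D` of `R`, the image of `u` in `D ⊗_R M` lies in the
robust closure, computed over `D`, of the image of `D ⊗_R N`. -/
def MemRobustClosure (R : Type u) [CommRing R] (M : Type u) [AddCommGroup M] [Module R M]
    (N : Submodule R M) (u : M) : Prop :=
  ∀ (D : Type u) [CommRing D] [Algebra R D], IsCompleteLocalDomainOf R D →
    (1 : D) ⊗ₜ[R] u ∈ robustClosureCLD D (D ⊗[R] M) (N.baseChange D)

/-!
A filtration of length `h` of `T ⧸ (x₁ᵗ, …, x_dᵗ)` is a finite system of equations in `T = D ⊗ S`,
which is integral over the complete local domain `D`, with `D → T` injective; so `T` may be taken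
finite over `D`.

In characteristic `p`, transport the equations by powers of Frobenius and compare with the monomial
filtration: for `N = pˢ > t` the length of `T ⧸ (x₁, …, x_d)^[Nᵉ]` is at most
`(h + N ^ d - t ^ d) ^ e` times that of `T ⧸ (x₁, …, x_d)`, while it grows at least like
`N ^ (e d)`. Hence `t ^ d ≤ h`.

In characteristic zero, `D` is finite over some `K⟦X₁, …, X_d⟧` by Cohen's structure theorem, and
the equations descend to an integral algebra over a finitely generated subring `W` containing the
`Xᵢ`. Specialising `W` to a domain of characteristic `p` in which the `Xᵢ` generate the maximal
ideal of a local domain of dimension at least `d` reduces to the previous case by base change.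

The specialisation is an elementary case of Artin approximation, by induction on `d`. `W` is
birationally a hypersurface over an affine space over `ℤ`. After a shear the product of its
derivative and its denominator is regular in one variable, and Weierstrass division modulo the
square of this product replaces the point by polynomials in that variable over power series in the
others. The coefficients generate a ring that is specialised by induction, and Newton's method
lifts the approximation back to a genuine point.
-/

section Length

variable (D : Type*) [CommRing D] {T : Type*} [CommRing T] [Algebra D T]

lemma length_quotient_anti {I J : Ideal T} (h : I ≤ J) :
    Module.length D (T ⧸ J) ≤ Module.length D (T ⧸ I) :=
  Module.length_le_of_surjective (Ideal.Quotient.factorₐ D h).toLinearMap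
    (Ideal.Quotient.factor_surjective h)

lemma length_quotient_eq_add_colon (I : Ideal T) (y : T) :
    Module.length D (T ⧸ I) =
      Module.length D (T ⧸ I ⊔ Ideal.span {y}) + Module.length D (T ⧸ I.colon {y}) := by
  have mem_colon (z : T) : z ∈ I.colon {y} ↔ y * z ∈ I := by
    rw [Submodule.mem_colon_singleton, smul_eq_mul, mul_comm]
  let mulY : (T ⧸ I.colon {y}) →ₗ[T] (T ⧸ I) :=
    Submodule.mapQ _ I (LinearMap.mulLeft T y) fun z hz => (mem_colon z).1 hz
  have mulY_injective : Function.Injective mulY := by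
    rw [injective_iff_map_eq_zero]
    intro z hz
    obtain ⟨z, rfl⟩ := Ideal.Quotient.mk_surjective z
    exact Ideal.Quotient.eq_zero_iff_mem.2 ((mem_colon z).2 (Ideal.Quotient.eq_zero_iff_mem.1 hz))
  have exact_mulY : Function.Exact mulY
      (Ideal.Quotient.factorₐ D (le_sup_left : I ≤ I ⊔ Ideal.span {y})).toLinearMap := by
    intro b
    obtain ⟨b, rfl⟩ := Ideal.Quotient.mk_surjective b
    change Ideal.Quotient.mk _ b = 0 ↔ _
    rw [Ideal.Quotient.eq_zero_iff_mem]
    constructor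
    · intro hb
      obtain ⟨i, hi, z, hz, rfl⟩ := Submodule.mem_sup.1 hb
      obtain ⟨w, rfl⟩ := Ideal.mem_span_singleton'.1 hz
      refine ⟨Ideal.Quotient.mk _ w, Ideal.Quotient.eq.2 ?_⟩
      have : y * w - (i + w * y) = -i := by ring
      exact this ▸ I.neg_mem hi
    · rintro ⟨z, hz⟩
      obtain ⟨z, rfl⟩ := Ideal.Quotient.mk_surjective z
      have hb : y * z - b ∈ I ⊔ Ideal.span {y} := Ideal.mem_sup_left (Ideal.Quotient.eq.1 hz)
      rw [← sub_sub_cancel (y * z) b]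
      exact Ideal.sub_mem _ (Ideal.mul_mem_right _ _
        (Ideal.mem_sup_right (Ideal.mem_span_singleton_self y))) hb
  rw [add_comm]
  exact Module.length_eq_add_of_exact (mulY.restrictScalars D) _ mulY_injective
    (Ideal.Quotient.factor_surjective le_sup_left) exact_mulY

lemma length_quotient_le_add_card_mul {ι κ : Type*} (B : Finset ι) (deg : ι → ℕ) (m : ι → T)
    (I : Ideal T) (x : κ → T)
    (hm : ∀ a ∈ B, ∀ j, x j * m a ∈ I ⊔ Ideal.span (m '' {b | b ∈ B ∧ deg a < deg b})) :
    Module.length D (T ⧸ I) ≤ Module.length D (T ⧸ I ⊔ Ideal.span (m '' B)) +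
      B.card * Module.length D (T ⧸ Ideal.span (Set.range x)) := by
  classical
  induction B using Finset.induction_on_min_value deg with
  | empty => simpa using length_quotient_anti D (le_of_eq (by simp))
  | insert a s ha hmin ih =>
    have mem_s {b c : ι} (hb : b ∈ insert a s) (hc : c ∈ insert a s ∧ deg b < deg c) : c ∈ s := by
      refine (Finset.mem_insert.1 hc.1).resolve_left ?_
      rintro rfl
      rcases Finset.mem_insert.1 hb with rfl | hb
      · exact lt_irrefl _ hc.2
      · exact (hmin b hb).not_gt hc.2
    have length_s := ih fun b hb j => by
      have hb' : b ∈ insert a s := Finset.mem_insert_of_mem hb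
      refine sup_le_sup_left (Ideal.span_mono (Set.image_mono ?_)) I (hm b hb' j)
      exact fun c hc => ⟨mem_s hb' hc, hc.2⟩
    have span_le_colon :
        Ideal.span (Set.range x) ≤ (I ⊔ Ideal.span (m '' s)).colon {m a} := by
      rw [Ideal.span_le]
      rintro _ ⟨j, rfl⟩
      exact Submodule.mem_colon_singleton.2 <|
        sup_le_sup_left (Ideal.span_mono (Set.image_mono fun _ => mem_s (s.mem_insert_self a))) I
          (hm a (s.mem_insert_self a) j)
    have span_insert : I ⊔ Ideal.span (m '' s) ⊔ Ideal.span {m a} =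
        I ⊔ Ideal.span (m '' (insert a s : Finset ι)) := by
      rw [sup_assoc, ← Ideal.span_union, Finset.coe_insert, Set.image_insert_eq,
        Set.union_singleton]
    calc Module.length D (T ⧸ I)
        ≤ Module.length D (T ⧸ I ⊔ Ideal.span (m '' s)) +
          s.card * Module.length D (T ⧸ Ideal.span (Set.range x)) := length_s
      _ ≤ Module.length D (T ⧸ I ⊔ Ideal.span (m '' (insert a s : Finset ι))) +
            Module.length D (T ⧸ Ideal.span (Set.range x)) +
          s.card * Module.length D (T ⧸ Ideal.span (Set.range x)) := by
        rw [length_quotient_eq_add_colon D _ (m a), span_insert]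
        gcongr
        exact length_quotient_anti D span_le_colon
      _ = _ := by
        rw [Finset.card_insert_of_notMem ha]
        push_cast
        ring

/-- The ideal generated by the `t`-th powers of a finite family `x`. It depends on `x` and not only
on the ideal generated by `x`. -/
abbrev powerIdeal {d : ℕ} (x : Fin d → T) (t : ℕ) : Ideal T :=
  Ideal.span (Set.range fun i => x i ^ t)

lemma mul_prod_pow_eq {d : ℕ} (y : Fin d → T) (a : Fin d → ℕ) (j : Fin d) :
    y j * ∏ i, y i ^ a i = ∏ i, y i ^ (a + Pi.single j 1 : Fin d → ℕ) i := by
  simp only [Pi.add_apply, pow_add, Finset.prod_mul_distrib, Pi.single_apply, pow_ite, pow_one,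
    pow_zero, Finset.prod_ite_eq', Finset.mem_univ, if_true, mul_comm]

lemma length_powerIdeal_le {d : ℕ} (y : Fin d → T) {t N : ℕ} (htN : t < N) :
    Module.length D (T ⧸ powerIdeal y N) ≤ Module.length D (T ⧸ powerIdeal y t) +
      ((N ^ d - t ^ d : ℕ) : ℕ∞) * Module.length D (T ⧸ Ideal.span (Set.range y)) := by
  let B : Finset (Fin d → ℕ) :=
    Fintype.piFinset (fun _ => Finset.range N) \ Fintype.piFinset (fun _ => Finset.range t)
  have card_B : B.card = N ^ d - t ^ d := by
    rw [Finset.card_sdiff_of_subset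
      (Fintype.piFinset_subset _ _ fun _ => Finset.range_subset_range.2 htN.le)]
    simp
  have mem_B (a : Fin d → ℕ) : a ∈ B ↔ (∀ i, a i < N) ∧ ∃ i, t ≤ a i := by simp [B]
  let monomial (a : Fin d → ℕ) : T := ∏ i, y i ^ a i
  have raise : ∀ a ∈ B, ∀ j, y j * monomial a ∈
      powerIdeal y N ⊔ Ideal.span (monomial '' {b | b ∈ B ∧ ∑ i, a i < ∑ i, b i}) := by
    intro a ha j
    obtain ⟨ha_lt, i, hi⟩ := (mem_B a).1 ha
    rw [mul_prod_pow_eq]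
    rcases (Nat.succ_le_of_lt (ha_lt j)).lt_or_eq with hj | hj
    · refine Ideal.mem_sup_right (Ideal.subset_span ⟨a + Pi.single j 1, ⟨?_, ?_⟩, rfl⟩)
      · refine (mem_B _).2 ⟨fun k => ?_, i, hi.trans (by simp)⟩
        obtain rfl | hk := eq_or_ne k j
        · simpa using hj
        · simpa [hk] using ha_lt k
      · simp [Finset.sum_add_distrib]
    · refine Ideal.mem_sup_left (Ideal.mem_of_dvd _ ?_ (Ideal.subset_span ⟨j, rfl⟩))
      have hj' : (a + Pi.single j 1 : Fin d → ℕ) j = N := by simpa using hj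
      exact hj' ▸ Finset.dvd_prod_of_mem
        (fun i => y i ^ (a + Pi.single j 1 : Fin d → ℕ) i) (Finset.mem_univ j)
  have powerIdeal_le : powerIdeal y t ≤ powerIdeal y N ⊔ Ideal.span (monomial '' B) := by
    rw [Ideal.span_le]
    rintro _ ⟨i, rfl⟩
    refine Ideal.mem_sup_right
      (Ideal.subset_span ⟨Pi.single i t, (mem_B _).2 ⟨fun k => ?_, i, ?_⟩, ?_⟩)
    · rw [Pi.single_apply]
      split_ifs <;> omega
    · simp
    · simp [monomial, Pi.single_apply]
  calc Module.length D (T ⧸ powerIdeal y N)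
      ≤ Module.length D (T ⧸ powerIdeal y N ⊔ Ideal.span (monomial '' B)) +
        B.card * Module.length D (T ⧸ Ideal.span (Set.range y)) :=
      length_quotient_le_add_card_mul D B (fun a => ∑ i, a i) monomial _ y raise
    _ ≤ _ := by
      rw [card_B]
      gcongr
      exact length_quotient_anti D powerIdeal_le

end Length

/-- Equations over `T` expressing that `T ⧸ (x₁ᵗ, …, x_dᵗ)` has a filtration of length `h` whose
factors are cyclic and killed by the `xⱼ`: the `i`-th step adjoins `gen i`. As a finite system of
polynomial equations it can be transported along ring homomorphisms and descends to subrings. -/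
structure FiltrationData {T : Type*} [CommRing T] {d : ℕ} (x : Fin d → T) (t h : ℕ) where
  gen : Fin h → T
  mulCoeff : Fin h → Fin d → Fin h → T
  mulRem : Fin h → Fin d → Fin d → T
  oneCoeff : Fin h → T
  oneRem : Fin d → T
  mul_gen : ∀ i j, x j * gen i =
    ∑ l ∈ Finset.Iio i, mulCoeff i j l * gen l + ∑ s, mulRem i j s * x s ^ t
  one_eq : 1 = ∑ l, oneCoeff l * gen l + ∑ s, oneRem s * x s ^ t

lemma exists_eq_sum_of_mk_mem_span {T ι κ : Type*} [CommRing T] [Fintype κ] (y : κ → T)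
    (m : ι → T) (B : Finset ι) {z : T}
    (hz : Ideal.Quotient.mk (Ideal.span (Set.range y)) z ∈
      Submodule.span T ((fun l => Ideal.Quotient.mk (Ideal.span (Set.range y)) (m l)) '' B)) :
    ∃ (a : ι → T) (e : κ → T), z = ∑ l ∈ B, a l * m l + ∑ s, e s * y s := by
  obtain ⟨a, ha⟩ := (Submodule.mem_span_image_finset_iff_exists_fun' T).1 hz
  have hmk : Ideal.Quotient.mk (Ideal.span (Set.range y)) z =
      Ideal.Quotient.mk (Ideal.span (Set.range y)) (∑ l ∈ B, a l * m l) := by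
    rw [← ha, map_sum]
    rfl
  obtain ⟨e, he⟩ := Ideal.mem_span_range_iff_exists_fun.1 (Ideal.Quotient.eq.1 hmk)
  exact ⟨a, e, by rw [he]; ring⟩

namespace FiltrationData

variable {T T' : Type*} [CommRing T] [CommRing T'] {d t h : ℕ} {x : Fin d → T}

theorem nonempty_of_hasQLFiltration {T : Type u} [CommRing T] {x : Fin d → T}
    (H : HasQLFiltration T (Ideal.span (Set.range x)) (T ⧸ powerIdeal x t) h) :
    Nonempty (FiltrationData x t h) := by
  obtain ⟨c, -, c_zero, c_last, c_step⟩ := H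
  choose m c_succ using fun i => (c_step i).1
  choose gen mk_gen using fun i => Ideal.Quotient.mk_surjective (m i)
  obtain rfl : (fun i => Ideal.Quotient.mk _ (gen i)) = m := funext mk_gen
  have c_le_span (k : Fin (h + 1)) : c k ≤
      Submodule.span T ((fun l => Ideal.Quotient.mk (powerIdeal x t) (gen l)) ''
        {l | l.castSucc < k}) := by
    induction k using Fin.induction with
    | zero => simp [c_zero]
    | succ i ih =>
      rw [c_succ i]
      refine sup_le (ih.trans (Submodule.span_mono (Set.image_mono fun l hl => ?_)))
        (Submodule.span_mono (Set.singleton_subset_iff.2 ⟨i, i.castSucc_lt_succ, rfl⟩))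
      exact lt_trans hl i.castSucc_lt_succ
  have exists_mulCoeff (i : Fin h) (j : Fin d) : ∃ (a : Fin h → T) (e : Fin d → T),
      x j * gen i = ∑ l ∈ Finset.Iio i, a l * gen l + ∑ s, e s * x s ^ t := by
    refine exists_eq_sum_of_mk_mem_span _ gen _ ?_
    have gen_mem : Ideal.Quotient.mk (powerIdeal x t) (gen i) ∈ c i.succ :=
      c_succ i ▸ Submodule.mem_sup_right (Submodule.mem_span_singleton_self _)
    have mul_mem := (c_step i).2 (x j) (Ideal.subset_span ⟨j, rfl⟩) _ gen_mem
    simpa [Algebra.smul_def, Set.Iio] using c_le_span _ mul_mem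
  have exists_oneCoeff : ∃ (a : Fin h → T) (e : Fin d → T),
      1 = ∑ l, a l * gen l + ∑ s, e s * x s ^ t := by
    refine exists_eq_sum_of_mk_mem_span _ gen _ ?_
    simpa [Fin.castSucc_lt_last] using
      c_le_span (Fin.last h) (c_last ▸ Submodule.mem_top (x := Ideal.Quotient.mk _ 1))
  choose mulCoeff mulRem mul_gen using exists_mulCoeff
  obtain ⟨oneCoeff, oneRem, one_eq⟩ := exists_oneCoeff
  exact ⟨⟨gen, mulCoeff, mulRem, oneCoeff, oneRem, mul_gen, one_eq⟩⟩

/-- The image of filtration data under a ring homomorphism. -/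
def map (H : FiltrationData x t h) (f : T →+* T') : FiltrationData (fun i => f (x i)) t h where
  gen i := f (H.gen i)
  mulCoeff i j l := f (H.mulCoeff i j l)
  mulRem i j s := f (H.mulRem i j s)
  oneCoeff l := f (H.oneCoeff l)
  oneRem s := f (H.oneRem s)
  mul_gen i j := by simpa using congrArg f (H.mul_gen i j)
  one_eq := by simpa using congrArg f H.one_eq

/-- The finitely many elements of `T` occurring in filtration data. -/
def entries (H : FiltrationData x t h) : Set T :=
  Set.range H.gen ∪ Set.range (fun k : Fin h × Fin d × Fin h => H.mulCoeff k.1 k.2.1 k.2.2) ∪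
    Set.range (fun k : Fin h × Fin d × Fin d => H.mulRem k.1 k.2.1 k.2.2) ∪
    Set.range H.oneCoeff ∪ Set.range H.oneRem

lemma entries_finite (H : FiltrationData x t h) : H.entries.Finite := by
  simp only [entries, Set.finite_union, Set.finite_range, and_self]

lemma nonempty_of_entries_subset_range {y : Fin d → T'} (f : T' →+* T)
    (hf : Function.Injective f) (H : FiltrationData (fun i => f (y i)) t h)
    (hH : H.entries ⊆ Set.range f) : Nonempty (FiltrationData y t h) := by
  simp only [entries, Set.union_subset_iff, Set.range_subset_iff, Prod.forall] at hH
  obtain ⟨⟨⟨⟨hgen, hmulCoeff⟩, hmulRem⟩, honeCoeff⟩, honeRem⟩ := hH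
  choose gen hgen using hgen
  choose mulCoeff hmulCoeff using hmulCoeff
  choose mulRem hmulRem using hmulRem
  choose oneCoeff honeCoeff using honeCoeff
  choose oneRem honeRem using honeRem
  exact ⟨⟨gen, mulCoeff, mulRem, oneCoeff, oneRem,
    fun i j => hf (by simpa [hgen, hmulCoeff, hmulRem] using H.mul_gen i j),
    hf (by simpa [hgen, honeCoeff, honeRem] using H.one_eq)⟩⟩

lemma length_le (D : Type*) [CommRing D] [Algebra D T] (H : FiltrationData x t h) :
    Module.length D (T ⧸ powerIdeal x t) ≤
      h * Module.length D (T ⧸ Ideal.span (Set.range x)) := by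
  have mul_gen_mem : ∀ i ∈ Finset.univ, ∀ j, x j * H.gen i ∈ powerIdeal x t ⊔
      Ideal.span (H.gen '' {l | l ∈ Finset.univ ∧ h - i.val < h - l.val}) := by
    intro i _ j
    rw [H.mul_gen]
    refine Ideal.add_mem _ (Ideal.mem_sup_right (Ideal.sum_mem _ fun l hl => ?_))
      (Ideal.mem_sup_left (Ideal.sum_mem _ fun s _ => ?_))
    · have hl : l.val < i.val := Fin.lt_def.1 (Finset.mem_Iio.1 hl)
      exact Ideal.mul_mem_left _ _ (Ideal.subset_span ⟨l, ⟨Finset.mem_univ _, by omega⟩, rfl⟩)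
    · exact Ideal.mul_mem_left _ _ (Ideal.subset_span ⟨s, rfl⟩)
  have sup_eq_top : powerIdeal x t ⊔ Ideal.span (H.gen '' (Finset.univ : Finset (Fin h))) = ⊤ := by
    rw [Ideal.eq_top_iff_one, H.one_eq]
    refine Ideal.add_mem _ (Ideal.mem_sup_right (Ideal.sum_mem _ fun l _ => ?_))
      (Ideal.mem_sup_left (Ideal.sum_mem _ fun s _ => ?_))
    · exact Ideal.mul_mem_left _ _ (Ideal.subset_span ⟨l, by simp, rfl⟩)
    · exact Ideal.mul_mem_left _ _ (Ideal.subset_span ⟨s, rfl⟩)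
  have length_le := length_quotient_le_add_card_mul D Finset.univ (fun l : Fin h => h - l.val)
    H.gen (powerIdeal x t) x mul_gen_mem
  have : Subsingleton (T ⧸ (⊤ : Ideal T)) := Ideal.Quotient.subsingleton_iff.2 rfl
  rwa [sup_eq_top, Module.length_eq_zero (M := T ⧸ (⊤ : Ideal T)), zero_add, Finset.card_univ,
    Fintype.card_fin] at length_le

end FiltrationData

section LengthGrowth

variable {D : Type*} [CommRing D] [IsNoetherianRing D]

lemma exists_colon_sup_pow_le (p J : Ideal D) [p.IsPrime] {y : D} (hy : y ∉ p) :
    ∃ c, 0 < c ∧ ∀ n, (p ⊔ J ^ (n + c)).colon {y} ≤ p ⊔ J ^ n := by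
  obtain ⟨k, hk⟩ := Ideal.exists_pow_inf_eq_pow_smul (M := D ⧸ p) J
    (Submodule.span D {Ideal.Quotient.mk p y})
  have mk_eq_smul (a : D) : Ideal.Quotient.mk p a = a • (1 : D ⧸ p) := by
    rw [Algebra.smul_def, mul_one, Ideal.Quotient.algebraMap_eq]
  refine ⟨k + 1, k.succ_pos, fun n z hz => ?_⟩
  rw [Submodule.mem_colon_singleton, smul_eq_mul] at hz
  have mk_mem : Ideal.Quotient.mk p (z * y) ∈ (J ^ (n + (k + 1)) • ⊤ ⊓
      Submodule.span D {Ideal.Quotient.mk p y} : Submodule D (D ⧸ p)) := by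
    constructor
    · obtain ⟨a, ha, b, hb, hab⟩ := Submodule.mem_sup.1 hz
      rw [← hab, map_add, Ideal.Quotient.eq_zero_iff_mem.2 ha, zero_add, mk_eq_smul]
      exact Submodule.smul_mem_smul hb trivial
    · exact Submodule.mem_span_singleton.2 ⟨z, by rw [Algebra.smul_def, map_mul]; rfl⟩
  rw [hk _ (by omega)] at mk_mem
  obtain ⟨j, hj, hjy⟩ :=
    Submodule.mem_smul_span_singleton.1 (Submodule.smul_mono le_rfl inf_le_right mk_mem)
  have sub_mul_mem : (j - z) * y ∈ p := by
    rw [sub_mul, ← Ideal.Quotient.eq, ← hjy, Algebra.smul_def, map_mul,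
      Ideal.Quotient.algebraMap_eq]
  rw [← sub_sub_cancel j z]
  exact Ideal.sub_mem _ (Ideal.mem_sup_right (Ideal.pow_le_pow_right (by omega) hj))
    (Ideal.mem_sup_left ((Ideal.IsPrime.mem_or_mem ‹_› sub_mul_mem).resolve_right hy))

lemma add_pow_succ_le (b c d : ℕ) :
    (b + c) ^ (d + 1) ≤ b ^ (d + 1) + (d + 1) * c * (b + c) ^ d := by
  have h := (le_abs_self _).trans (abs_pow_sub_pow_le ((b : ℤ) + c) b (d + 1))
  have hmax : max |(b : ℤ) + c| |(b : ℤ)| = b + c := by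
    rw [abs_of_nonneg (by positivity), abs_of_nonneg (by positivity), max_eq_left (by omega)]
  rw [hmax, add_sub_cancel_left, Nat.abs_cast, Nat.add_sub_cancel] at h
  zify
  push_cast at h
  linarith

lemma exists_pow_succ_le_mul {f g : ℕ → ℕ∞} {c C d : ℕ} (hc : 0 < c) (hf : ∀ n, 0 < n → 1 ≤ f n)
    (hg : ∀ n : ℕ, 0 < n → (n : ℕ∞) ^ d ≤ C * g n) (hfg : ∀ n, g (n + c) + f n ≤ f (n + c)) :
    ∃ C' : ℕ, ∀ n : ℕ, 0 < n → (n : ℕ∞) ^ (d + 1) ≤ C' * f n := by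
  set C' := (d + 1) * c * C + c ^ (d + 1)
  refine ⟨C', fun n => ?_⟩
  induction n using Nat.strong_induction_on with
  | _ n ih =>
    intro hn
    rcases le_or_gt n c with hnc | hnc
    · calc (n : ℕ∞) ^ (d + 1) ≤ (C' : ℕ∞) * 1 := by
            rw [mul_one]
            exact_mod_cast (Nat.pow_le_pow_left hnc _).trans (Nat.le_add_left _ _)
        _ ≤ C' * f n := by gcongr; exact hf n hn
    · obtain ⟨b, rfl⟩ := Nat.exists_eq_add_of_le' hnc.le
      calc ((b + c : ℕ) : ℕ∞) ^ (d + 1)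
          ≤ (b : ℕ∞) ^ (d + 1) + ((d + 1) * c : ℕ) * ((b + c : ℕ) : ℕ∞) ^ d := by
            exact_mod_cast add_pow_succ_le b c d
        _ ≤ C' * f b + ((d + 1) * c : ℕ) * (C * g (b + c)) := by
            gcongr
            · exact ih b (by omega) (by omega)
            · exact hg _ hn
        _ = C' * f b + ((d + 1) * c * C : ℕ) * g (b + c) := by push_cast; ring
        _ ≤ C' * f b + C' * g (b + c) := by gcongr; omega
        _ = C' * (g (b + c) + f b) := by ring
        _ ≤ C' * f (b + c) := by gcongr; exact hfg b

lemma exists_pow_le_mul_length [IsLocalRing D] {J : Ideal D} (hJ : J ≠ ⊤) {d : ℕ}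
    (p : PrimeSpectrum D) (hp : d ≤ Order.coheight p) :
    ∃ C : ℕ, ∀ n : ℕ, 0 < n → (n : ℕ∞) ^ d ≤ C * Module.length D (D ⧸ p.asIdeal ⊔ J ^ n) := by
  have one_le_length (p : PrimeSpectrum D) (n : ℕ) (hn : 0 < n) :
      1 ≤ Module.length D (D ⧸ p.asIdeal ⊔ J ^ n) := by
    have sup_le_maximalIdeal : p.asIdeal ⊔ J ^ n ≤ IsLocalRing.maximalIdeal D :=
      sup_le (IsLocalRing.le_maximalIdeal p.2.ne_top)
        ((Ideal.pow_le_self hn.ne').trans (IsLocalRing.le_maximalIdeal hJ))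
    rw [Order.one_le_iff_ne_zero, ← pos_iff_ne_zero, Module.length_pos_iff,
      Ideal.Quotient.nontrivial_iff]
    exact ne_top_of_le_ne_top (IsLocalRing.maximalIdeal.isMaximal D).ne_top sup_le_maximalIdeal
  induction d generalizing p with
  | zero => exact ⟨1, fun n hn => by simpa using one_le_length p n hn⟩
  | succ d ih =>
    obtain ⟨q, hpq, hq⟩ : ∃ q > p, d ≤ Order.coheight q := by
      by_contra! h
      exact (Order.coheight_le_coe_iff.2 h).not_gt ((Nat.cast_lt.2 d.lt_succ_self).trans_le hp)
    obtain ⟨C, hC⟩ := ih q hq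
    obtain ⟨y, hyq, hyp⟩ := Set.exists_of_ssubset (show (p.asIdeal : Set D) ⊂ q.asIdeal from hpq)
    obtain ⟨c, hc, hcolon⟩ := exists_colon_sup_pow_le p.asIdeal J hyp
    refine exists_pow_succ_le_mul hc (one_le_length p) hC fun n => ?_
    rw [length_quotient_eq_add_colon D (p.asIdeal ⊔ J ^ (n + c)) y]
    refine add_le_add (length_quotient_anti D (sup_le (sup_le_sup_right hpq.le _) ?_))
      (length_quotient_anti D (hcolon n))
    exact (Ideal.span_singleton_le_iff_mem _).2 (Ideal.mem_sup_left hyq)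

variable {T : Type*} [CommRing T] [Algebra D T] [Module.Finite D T]

lemma length_quotient_map_ne_top {J : Ideal D} (hJ : J.radical.IsMaximal) :
    Module.length D (T ⧸ J.map (algebraMap D T)) ≠ ⊤ := by
  have isMaximal_of_isPrime (P : Ideal (D ⧸ J)) (hP : P.IsPrime) : P.IsMaximal := by
    have le_comap : J ≤ P.comap (Ideal.Quotient.mk J) := fun a ha => by
      simp [Ideal.Quotient.eq_zero_iff_mem.2 ha]
    have hcomap := Ideal.comap_isPrime (Ideal.Quotient.mk J) P
    have radical_eq : J.radical = P.comap (Ideal.Quotient.mk J) :=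
      hJ.eq_of_le hcomap.ne_top (hcomap.radical_le_iff.2 le_comap)
    exact Ideal.isMaximal_of_isIntegral_of_isMaximal_comap (R := D) P (radical_eq ▸ hJ)
  have : IsArtinianRing (D ⧸ J) := isArtinianRing_iff_isNoetherianRing_krullDimLE_zero.2
    ⟨inferInstance, Ring.krullDimLE_zero_iff.2 isMaximal_of_isPrime⟩
  have : Module.Finite (D ⧸ J) (T ⧸ J.map (algebraMap D T)) :=
    Module.Finite.of_restrictScalars_finite D _ _
  have : IsArtinian D (T ⧸ J.map (algebraMap D T)) :=
    isArtinian_of_surjective_algebraMap (R := D ⧸ J) Ideal.Quotient.mk_surjective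
  exact Module.length_ne_top

lemma exists_length_quotient_pow_le (hinj : Function.Injective (algebraMap D T)) (J : Ideal D) :
    ∃ k, ∀ n, Module.length D (D ⧸ J ^ n) ≤
      Module.length D (T ⧸ (J ^ (n + k)).map (algebraMap D T)) := by
  obtain ⟨k, hk⟩ :=
    Ideal.exists_pow_inf_eq_pow_smul (M := T) J (LinearMap.range (Algebra.linearMap D T))
  refine ⟨k, fun n => ?_⟩
  have comap_le : ((J ^ (n + k)).map (algebraMap D T)).comap (algebraMap D T) ≤ J ^ n := by
    intro z hz
    have algebraMap_mem : algebraMap D T z ∈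
        (J ^ (n + k) • ⊤ ⊓ LinearMap.range (Algebra.linearMap D T) : Submodule D T) :=
      ⟨by rw [Ideal.smul_top_eq_map]; exact hz, z, rfl⟩
    rw [hk _ (Nat.le_add_left k n), Nat.add_sub_cancel] at algebraMap_mem
    have smul_range := Submodule.smul_mono le_rfl inf_le_right algebraMap_mem
    rw [LinearMap.range_eq_map, ← Submodule.map_smul''] at smul_range
    obtain ⟨w, hw, hwz⟩ := smul_range
    obtain rfl : w = z := hinj hwz
    simpa using hw
  exact (length_quotient_anti D comap_le).trans <| Module.length_le_of_injective
    (Ideal.quotientMapₐ _ (Algebra.ofId D T) le_rfl).toLinearMap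
    (Ideal.quotientMap_injective (f := algebraMap D T))

end LengthGrowth

section PrimeCharacteristic

lemma pow_le_of_forall_sub_pow_le {N d h C k : ℕ} (hN : 2 ≤ N)
    (H : ∀ e, k < N ^ e → (N ^ e - k) ^ d ≤ C * h ^ e) : N ^ d ≤ h := by
  by_contra! hlt
  have tendsto_zero : Filter.Tendsto
      (fun e : ℕ => (2 : ℝ) ^ d * C * ((h : ℝ) / (N : ℝ) ^ d) ^ e) Filter.atTop (nhds 0) := by
    have : (h : ℝ) / (N : ℝ) ^ d < 1 := by
      rw [div_lt_one (by positivity)]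
      exact_mod_cast hlt
    simpa using (tendsto_pow_atTop_nhds_zero_of_lt_one (by positivity) this).const_mul
      ((2 : ℝ) ^ d * C)
  obtain ⟨e, he_lt, he_gt⟩ := ((tendsto_zero.eventually (gt_mem_nhds zero_lt_one)).and
    ((tendsto_pow_atTop_atTop_of_one_lt hN).eventually
      (Filter.eventually_gt_atTop (2 * k)))).exists
  have pow_le : (N ^ d) ^ e ≤ 2 ^ d * (C * h ^ e) := calc
    (N ^ d) ^ e = (N ^ e) ^ d := by rw [← pow_mul, ← pow_mul, mul_comm]
    _ ≤ (2 * (N ^ e - k)) ^ d := Nat.pow_le_pow_left (by omega) d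
    _ = 2 ^ d * (N ^ e - k) ^ d := mul_pow ..
    _ ≤ 2 ^ d * (C * h ^ e) := Nat.mul_le_mul_left _ (H e (by omega))
  rw [div_pow, mul_div_assoc', div_lt_one (by positivity), mul_assoc] at he_lt
  exact he_lt.not_ge (by exact_mod_cast pow_le)

variable {T : Type*} [CommRing T] {d t h : ℕ}

lemma FiltrationData.length_powerIdeal_pow_le (p : ℕ) [Fact p.Prime] [CharP T p]
    (D : Type*) [CommRing D] [Algebra D T]
    {y : Fin d → T} (H : FiltrationData y t h) {s : ℕ} (hts : t < p ^ s) (e : ℕ) :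
    Module.length D (T ⧸ powerIdeal y ((p ^ s) ^ e)) ≤
      ((h + ((p ^ s) ^ d - t ^ d) : ℕ) : ℕ∞) ^ e * Module.length D (T ⧸ powerIdeal y 1) := by
  set N := p ^ s
  induction e with
  | zero => rw [pow_zero, pow_zero, one_mul]
  | succ e ih =>
    have frobenius_eq : (fun i => iterateFrobenius T p (s * e) (y i)) = fun i => y i ^ N ^ e :=
      funext fun i => by rw [iterateFrobenius_def, pow_mul]
    have powerIdeal_eq : powerIdeal y (N ^ (e + 1)) = powerIdeal (fun i => y i ^ N ^ e) N := by
      simp only [powerIdeal, ← pow_mul, pow_succ]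
    have length_le_t := (H.map (iterateFrobenius T p (s * e))).length_le D
    have length_le_N := length_powerIdeal_le D (fun i => y i ^ N ^ e) hts
    rw [frobenius_eq] at length_le_t
    calc Module.length D (T ⧸ powerIdeal y (N ^ (e + 1)))
        = Module.length D (T ⧸ powerIdeal (fun i => y i ^ N ^ e) N) := by
          rw [powerIdeal_eq]
      _ ≤ h * Module.length D (T ⧸ powerIdeal y (N ^ e)) +
            ((N ^ d - t ^ d : ℕ) : ℕ∞) * Module.length D (T ⧸ powerIdeal y (N ^ e)) :=
          length_le_N.trans (by gcongr)
      _ = ((h + (N ^ d - t ^ d) : ℕ) : ℕ∞) * Module.length D (T ⧸ powerIdeal y (N ^ e)) := by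
          push_cast; ring
      _ ≤ ((h + (N ^ d - t ^ d) : ℕ) : ℕ∞) *
            (((h + (N ^ d - t ^ d) : ℕ) : ℕ∞) ^ e * Module.length D (T ⧸ powerIdeal y 1)) := by
          gcongr
      _ = _ := by ring

variable {D : Type*} [CommRing D] [IsNoetherianRing D] [IsLocalRing D] [Algebra D T]
  {x : Fin d → D}

lemma exists_sub_pow_le_mul_length_powerIdeal [Module.Finite D T]
    (hinj : Function.Injective (algebraMap D T)) (hd : d ≤ ringKrullDim D)
    (hx : Ideal.span (Set.range x) ≠ ⊤) :
    ∃ C k : ℕ, ∀ n : ℕ, k < n → ((n - k : ℕ) : ℕ∞) ^ d ≤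
      C * Module.length D (T ⧸ powerIdeal (fun i => algebraMap D T (x i)) n) := by
  set J := Ideal.span (Set.range x) with hJ
  obtain ⟨l, rfl⟩ := Order.le_krullDim_iff.1 hd
  obtain ⟨C, hC⟩ := exists_pow_le_mul_length hx l.head Order.length_le_coheight_head
  obtain ⟨k, hk⟩ := exists_length_quotient_pow_le (T := T) hinj J
  have powerIdeal_le (n : ℕ) :
      powerIdeal (fun i => algebraMap D T (x i)) n ≤ (J ^ n).map (algebraMap D T) := by
    rw [Ideal.span_le, Ideal.map_pow]
    rintro _ ⟨i, rfl⟩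
    exact Ideal.pow_mem_pow (Ideal.mem_map_of_mem _ (Ideal.subset_span (Set.mem_range_self i))) n
  refine ⟨C, k, fun n hn => (hC (n - k) (Nat.sub_pos_of_lt hn)).trans ?_⟩
  gcongr
  calc Module.length D (D ⧸ l.head.asIdeal ⊔ J ^ (n - k))
      ≤ Module.length D (D ⧸ J ^ (n - k)) := length_quotient_anti D le_sup_right
    _ ≤ Module.length D (T ⧸ (J ^ n).map (algebraMap D T)) := by
        have := hk (n - k)
        rwa [Nat.sub_add_cancel hn.le] at this
    _ ≤ _ := length_quotient_anti D (powerIdeal_le n)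

lemma FiltrationData.pow_le_of_finite_of_charP (p : ℕ) [Fact p.Prime] [CharP T p]
    [Module.Finite D T]
    (hinj : Function.Injective (algebraMap D T)) (hd : d ≤ ringKrullDim D)
    (hx : (Ideal.span (Set.range x)).radical.IsMaximal)
    (H : FiltrationData (fun i => algebraMap D T (x i)) t h) : t ^ d ≤ h := by
  obtain ⟨C, k, hCk⟩ := exists_sub_pow_le_mul_length_powerIdeal (T := T) hinj hd
    (ne_top_of_le_ne_top hx.ne_top Ideal.le_radical)
  have length_ne_top := length_quotient_map_ne_top (T := T) hx
  rw [Ideal.map_span, ← Set.range_comp] at length_ne_top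
  obtain ⟨A, hA⟩ := ENat.ne_top_iff_exists.1 length_ne_top
  have hp := (Fact.out : p.Prime).two_le
  set N := p ^ (t + 1)
  have t_lt_N : t < N := (Nat.lt_pow_self hp).trans (Nat.pow_lt_pow_right hp t.lt_succ_self)
  have powerIdeal_one : powerIdeal (fun i => algebraMap D T (x i)) 1 =
      Ideal.span (Set.range (algebraMap D T ∘ x)) := by
    simp only [powerIdeal, pow_one]
    rfl
  suffices N ^ d ≤ h + (N ^ d - t ^ d) by
    have := Nat.pow_le_pow_left t_lt_N.le d
    omega
  refine pow_le_of_forall_sub_pow_le (C := C * A) (k := k)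
    (hp.trans (Nat.le_self_pow t.succ_ne_zero p)) fun e he => ?_
  have := (hCk _ he).trans
    (mul_le_mul_right (H.length_powerIdeal_pow_le p D t_lt_N e) _)
  rw [powerIdeal_one, ← hA] at this
  rw [mul_assoc, mul_comm A]
  exact_mod_cast this

theorem FiltrationData.pow_le_of_charP (p : ℕ) [Fact p.Prime] [CharP T p] [Algebra.IsIntegral D T]
    (hinj : Function.Injective (algebraMap D T)) (hd : d ≤ ringKrullDim D)
    (hx : (Ideal.span (Set.range x)).radical.IsMaximal)
    (H : FiltrationData (fun i => algebraMap D T (x i)) t h) : t ^ d ≤ h := by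
  let T₀ := Algebra.adjoin D H.entries
  have : Module.Finite D T₀ := Algebra.finite_adjoin_of_finite_of_isIntegral H.entries_finite
    fun a _ => Algebra.IsIntegral.isIntegral a
  have : CharP T₀ p := (T₀.val : T₀ →+* T).charP Subtype.val_injective p
  obtain ⟨H₀⟩ := nonempty_of_entries_subset_range (y := fun i => algebraMap D T₀ (x i))
    (T₀.val : T₀ →+* T) Subtype.val_injective H fun a ha => ⟨⟨a, Algebra.subset_adjoin ha⟩, rfl⟩
  exact H₀.pow_le_of_finite_of_charP p
    (fun a b hab => hinj (congrArg T₀.val hab)) hd hx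

end PrimeCharacteristic

section Presentation

open scoped nonZeroDivisors

lemma exists_pow_mul_eq_of_mem_closure {A W C ι : Type*} [CommRing A] [CommRing W] [CommRing C]
    {ε : A →+* W} {η : A →+* C} {H : A} {w : ι → W} {b : ι → C} {a : ι → A}
    (hεw : ∀ i, ε H * w i = ε (a i)) (hηb : ∀ i, η H * b i = η (a i)) {x : W × C}
    (hx : x ∈ Subring.closure (Set.range fun i => (w i, b i))) :
    ∃ n u, ε H ^ n * x.1 = ε u ∧ η H ^ n * x.2 = η u := by
  induction hx using Subring.closure_induction with
  | mem x hx =>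
    obtain ⟨i, rfl⟩ := hx
    exact ⟨1, a i, by simpa using hεw i, by simpa using hηb i⟩
  | zero => exact ⟨0, 0, by simp, by simp⟩
  | one => exact ⟨0, 1, by simp, by simp⟩
  | add x y _ _ hx hy =>
    obtain ⟨m, u, hu, hu'⟩ := hx
    obtain ⟨n, v, hv, hv'⟩ := hy
    refine ⟨m + n, H ^ n * u + H ^ m * v, ?_, ?_⟩
    · simp only [map_add, map_mul, map_pow, ← hu, ← hv, Prod.fst_add]; ring
    · simp only [map_add, map_mul, map_pow, ← hu', ← hv', Prod.snd_add]; ring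
  | neg x _ hx =>
    obtain ⟨n, u, hu, hu'⟩ := hx
    exact ⟨n, -u, by simp [← hu], by simp [← hu']⟩
  | mul x y _ _ hx hy =>
    obtain ⟨m, u, hu, hu'⟩ := hx
    obtain ⟨n, v, hv, hv'⟩ := hy
    refine ⟨m + n, u * v, ?_, ?_⟩
    · simp only [map_mul, ← hu, ← hv, Prod.fst_mul]; ring
    · simp only [map_mul, ← hu', ← hv', Prod.snd_mul]; ring

-- `ψ` is the second projection of the subring of `W × C` generated by the pairs `(w i, b i)`;
-- up to powers of `H` its elements come from `A`, which makes the first projection injective.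
theorem exists_ringHom_of_ker_le {A W C ι : Type*} [CommRing A] [CommRing W] [CommRing C]
    {ε : A →+* W} {η : A →+* C} (hker : RingHom.ker ε ≤ RingHom.ker η) {H : A}
    (hH : η H ∈ C⁰) {w : ι → W} (hw : Subring.closure (Set.range w) = ⊤) {b : ι → C} {a : ι → A}
    (hεw : ∀ i, ε H * w i = ε (a i)) (hηb : ∀ i, η H * b i = η (a i)) :
    ∃ ψ : W →+* C, ∀ i, ψ (w i) = b i := by
  let S : Subring (W × C) := Subring.closure (Set.range fun i => (w i, b i))
  let fst : S →+* W := (RingHom.fst W C).comp S.subtype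
  have fst_injective : Function.Injective fst := by
    rw [injective_iff_map_eq_zero]
    rintro ⟨⟨x, c⟩, hxc⟩ rfl
    obtain ⟨n, u, hu, hu'⟩ := exists_pow_mul_eq_of_mem_closure hεw hηb hxc
    have hηu : η u = 0 := hker (by simpa [fst] using hu.symm)
    rw [hηu, mul_comm] at hu'
    exact Subtype.ext (Prod.ext rfl ((mem_nonZeroDivisors_iff_right.1 (pow_mem hH n)) c hu'))
  have fst_surjective : Function.Surjective fst := by
    rw [← RingHom.range_eq_top, eq_top_iff, ← hw, Subring.closure_le]
    rintro _ ⟨i, rfl⟩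
    exact ⟨⟨_, Subring.subset_closure ⟨i, rfl⟩⟩, rfl⟩
  let e : S ≃+* W := RingEquiv.ofBijective fst ⟨fst_injective, fst_surjective⟩
  refine ⟨((RingHom.snd W C).comp S.subtype).comp (e.symm : W →+* S), fun i => ?_⟩
  have he : e.symm (w i) = ⟨(w i, b i), Subring.subset_closure ⟨i, rfl⟩⟩ := by
    rw [RingEquiv.symm_apply_eq]; rfl
  simp [he]

lemma exists_isIntegral_adjoin_eq_top {Z W : Type*} (L F : Type*) [CommRing Z] [IsDomain Z]
    [CommRing W] [IsDomain W] [Algebra Z W] [FaithfulSMul Z W] [Algebra.IsAlgebraic Z W]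
    [Field L] [Field F] [Algebra Z L] [IsFractionRing Z L] [Algebra W F] [IsFractionRing W F]
    [Algebra L F] [Algebra Z F] [IsScalarTower Z W F] [IsScalarTower Z L F]
    [FiniteDimensional L F] [Algebra.IsSeparable L F] :
    ∃ θ : W, IsIntegral Z θ ∧ Algebra.adjoin L {algebraMap W F θ} = ⊤ := by
  obtain ⟨α, hα⟩ := Field.exists_primitive_element L F
  obtain ⟨⟨w, _, z, hz, rfl⟩, hw⟩ := IsLocalization.surj (Algebra.algebraMapSubmonoid W Z⁰) α
  obtain ⟨y, hy, hyw⟩ :=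
    IsAlgebraic.exists_integral_multiple (Algebra.IsAlgebraic.isAlgebraic (R := Z) w)
  have hyz : algebraMap Z L (y * z) ≠ 0 :=
    IsFractionRing.to_map_ne_zero_of_mem_nonZeroDivisors
      (mul_mem (mem_nonZeroDivisors_of_ne_zero hy) hz)
  have hθ : algebraMap W F (y • w) = algebraMap L F (algebraMap Z L (y * z)) * α := by
    rw [Algebra.smul_def, map_mul, ← hw, ← IsScalarTower.algebraMap_apply,
      ← IsScalarTower.algebraMap_apply, ← IsScalarTower.algebraMap_apply, map_mul]
    ring
  refine ⟨y • w, hyw, (IntermediateField.adjoin_simple_eq_top_iff_of_isAlgebraic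
    (Algebra.IsAlgebraic.isAlgebraic _)).1 ?_⟩
  rw [eq_top_iff, ← hα, IntermediateField.adjoin_le_iff, Set.singleton_subset_iff]
  have hα_eq : α = algebraMap W F (y • w) / algebraMap L F (algebraMap Z L (y * z)) := by
    rw [hθ, mul_div_cancel_left₀]
    exact (map_ne_zero _).2 hyz
  rw [hα_eq]
  exact div_mem (IntermediateField.mem_adjoin_simple_self _ _) (algebraMap_mem _ _)

attribute [local instance] Polynomial.algebra Polynomial.isLocalization in
lemma exists_common_denominator {Z L F ι : Type*} [Finite ι] [CommRing Z] [IsDomain Z]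
    [Field L] [Field F] [Algebra Z L] [IsFractionRing Z L] [Algebra L F] [Algebra Z F]
    [IsScalarTower Z L F] {θ : F} (hθ : Algebra.adjoin L {θ} = ⊤) (x : ι → F) :
    ∃ h : Z, h ≠ 0 ∧ ∃ a : ι → Polynomial Z,
      ∀ i, algebraMap Z F h * x i = Polynomial.aeval θ (a i) := by
  have exists_aeval_eq (i) : ∃ P : Polynomial L, Polynomial.aeval θ P = x i := by
    rw [← AlgHom.mem_range, ← Algebra.adjoin_singleton_eq_range_aeval, hθ]
    trivial
  choose P hP using exists_aeval_eq
  obtain ⟨⟨_, h, hh, rfl⟩, hint⟩ :=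
    IsLocalization.exist_integer_multiples_of_finite (Z⁰.map (Polynomial.C : Z →+* _)) P
  choose a ha using hint
  refine ⟨h, nonZeroDivisors.ne_zero hh, a, fun i => ?_⟩
  have key := congrArg (Polynomial.aeval θ) (ha i)
  rw [Algebra.smul_def, map_mul, hP] at key
  simp only [Polynomial.algebraMap_def, Polynomial.coe_mapRingHom, Polynomial.map_C,
    Polynomial.aeval_C, Polynomial.aeval_map_algebraMap,
    ← IsScalarTower.algebraMap_apply] at key
  exact key.symm

lemma aeval_derivative_minpoly_ne_zero {Z W : Type*} [CommRing Z] [IsDomain Z]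
    [IsIntegrallyClosed Z] [CharZero Z] [CommRing W] [IsDomain W] [Algebra Z W]
    [FaithfulSMul Z W] {θ : W} (hθ : IsIntegral Z θ) :
    Polynomial.aeval θ (Polynomial.derivative (minpoly Z θ)) ≠ 0 := by
  intro h0
  have derivative_eq_zero : Polynomial.derivative (minpoly Z θ) = 0 :=
    Polynomial.eq_zero_of_dvd_of_degree_lt (minpoly.isIntegrallyClosed_dvd hθ h0)
      (Polynomial.degree_derivative_lt (minpoly.ne_zero hθ))
  exact (minpoly.natDegree_pos hθ).ne' (Polynomial.derivative_eq_zero.1 derivative_eq_zero)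

/-- A family `w` in a ring `W`, presented birationally as a hypersurface over an affine space
over `ℤ`: up to the denominator `denom`, every `w i` is a polynomial in elements of `W` whose only
relation is `relation`, and this relation is separable in its last variable. Only the evaluation of
polynomials at those elements is recorded. -/
structure HypersurfacePresentation (σ : Type*) {ι W : Type*} [CommRing W] (w : ι → W) where
  eval : Polynomial (MvPolynomial σ ℤ) →+* W
  relation : Polynomial (MvPolynomial σ ℤ)
  denom : MvPolynomial σ ℤ
  num : ι → Polynomial (MvPolynomial σ ℤ)
  eval_relation : eval relation = 0
  relation_dvd : ∀ Q, eval Q = 0 → relation ∣ Q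
  eval_derivative_ne_zero : eval (Polynomial.derivative relation) ≠ 0
  eval_denom_ne_zero : eval (Polynomial.C denom) ≠ 0
  eval_denom_mul : ∀ i, eval (Polynomial.C denom) * w i = eval (num i)

lemma finiteDimensional_fractionRing (k Z W : Type*) (L F : Type*) [CommRing k] [CommRing Z]
    [IsDomain Z] [CommRing W] [IsDomain W] [Algebra k W] [Algebra.FiniteType k W] [Algebra Z W]
    [Algebra.IsAlgebraic Z W] [FaithfulSMul Z W] [Field L] [Field F] [Algebra Z L]
    [IsFractionRing Z L] [Algebra W F] [IsFractionRing W F] [Algebra L F] [Algebra Z F]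
    [IsScalarTower Z W F] [IsScalarTower Z L F] [Algebra k F] [IsScalarTower k W F]
    [Algebra k L] [IsScalarTower k L F] : FiniteDimensional L F := by
  have : Algebra.EssFiniteType W F := .of_isLocalization F W⁰
  have : Algebra.EssFiniteType k F := .comp k W F
  have : Algebra.EssFiniteType L F := .of_comp k L F
  have : Algebra.IsAlgebraic W F := IsLocalization.isAlgebraic (R := W) (S := F) W⁰
  have : Algebra.IsAlgebraic Z F := .trans Z W F
  have : Algebra.IsAlgebraic L F := .extendScalars (IsFractionRing.injective Z L)
  exact Algebra.finite_of_essFiniteType_of_isAlgebraic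

theorem HypersurfacePresentation.nonempty_of_isAlgebraic {σ ι W : Type*} [Finite ι] [CommRing W]
    [IsDomain W] [Algebra.FiniteType ℤ W] [Algebra (MvPolynomial σ ℤ) W]
    [FaithfulSMul (MvPolynomial σ ℤ) W] [Algebra.IsAlgebraic (MvPolynomial σ ℤ) W] (w : ι → W) :
    Nonempty (HypersurfacePresentation σ w) := by
  let Z := MvPolynomial σ ℤ
  let L := FractionRing Z
  let F := FractionRing W
  have : FaithfulSMul Z F := .trans Z W F
  let _ : Algebra L F := FractionRing.liftAlgebra Z F
  have : IsScalarTower Z L F := FractionRing.isScalarTower_liftAlgebra Z F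
  have : CharZero L := charZero_of_injective_algebraMap (IsFractionRing.injective Z L)
  have : FiniteDimensional L F := finiteDimensional_fractionRing ℤ Z W L F
  obtain ⟨θ, hθ, adjoin_eq_top⟩ := exists_isIntegral_adjoin_eq_top (Z := Z) (W := W) L F
  obtain ⟨h, hh, a, ha⟩ :=
    exists_common_denominator (Z := Z) adjoin_eq_top fun i => algebraMap W F (w i)
  exact ⟨{
    eval := (Polynomial.aeval (R := Z) θ).toRingHom
    relation := minpoly Z θ
    denom := h
    num := a
    eval_relation := minpoly.aeval Z θ
    relation_dvd := fun _ hQ => minpoly.isIntegrallyClosed_dvd hθ hQ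
    eval_derivative_ne_zero := aeval_derivative_minpoly_ne_zero hθ
    eval_denom_ne_zero := by simpa using hh
    eval_denom_mul := fun i => by
      apply IsFractionRing.injective W F
      simpa [← Polynomial.aeval_algebraMap_apply, ← IsScalarTower.algebraMap_apply] using ha i }⟩

theorem HypersurfacePresentation.exists_finite {ι W : Type*} [Finite ι] [CommRing W] [IsDomain W]
    [CharZero W] (w : ι → W) (hw : Subring.closure (Set.range w) = ⊤) :
    ∃ s : Set W, s.Finite ∧ Nonempty (HypersurfacePresentation s w) := by
  have adjoin_eq_top : Algebra.adjoin ℤ (Set.range w) = ⊤ := by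
    rw [Algebra.adjoin_int, hw]
    rfl
  have : Algebra.FiniteType ℤ W := ⟨(Set.finite_range w).toFinset, by simpa using adjoin_eq_top⟩
  have : Algebra.IsAlgebraic (Algebra.adjoin ℤ (Set.range w)) W :=
    ⟨fun x => isAlgebraic_algebraMap
      (⟨x, adjoin_eq_top ▸ trivial⟩ : Algebra.adjoin ℤ (Set.range w))⟩
  obtain ⟨s, hs, basis⟩ := exists_isTranscendenceBasis_subset (R := ℤ) (Set.range w)
  let y : s → W := Subtype.val
  let _ : Algebra (MvPolynomial s ℤ) W := (MvPolynomial.aeval y).toRingHom.toAlgebra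
  have : FaithfulSMul (MvPolynomial s ℤ) W :=
    (faithfulSMul_iff_algebraMap_injective _ _).2 basis.1
  have : Algebra.IsAlgebraic (Algebra.adjoin ℤ (Set.range y)) W := basis.isAlgebraic
  have : Algebra.IsAlgebraic (MvPolynomial s ℤ) W :=
    .of_ringHom_of_comp_eq basis.1.aevalEquiv (RingHom.id W) basis.1.aevalEquiv.surjective
      Function.injective_id (RingHom.ext fun z => basis.1.algebraMap_aevalEquiv z)
  exact ⟨s, (Set.finite_range w).subset hs, HypersurfacePresentation.nonempty_of_isAlgebraic w⟩

theorem HypersurfacePresentation.exists_ringHom {σ ι W C : Type*} [CommRing W] [CommRing C]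
    {w : ι → W} (P : HypersurfacePresentation σ w) (hw : Subring.closure (Set.range w) = ⊤)
    {η : Polynomial (MvPolynomial σ ℤ) →+* C} (hη : η P.relation = 0)
    (hden : η (Polynomial.C P.denom) ∈ C⁰) {b : ι → C}
    (hb : ∀ i, η (Polynomial.C P.denom) * b i = η (P.num i)) :
    ∃ ψ : W →+* C, ∀ i, ψ (w i) = b i := by
  refine exists_ringHom_of_ker_le (fun Q hQ => ?_) hden hw P.eval_denom_mul hb
  obtain ⟨R, rfl⟩ := P.relation_dvd Q hQ
  rw [RingHom.mem_ker, map_mul, hη, zero_mul]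

end Presentation

section ApproximateSolutions

theorem exists_eq_mul_eval {B : Type*} [CommRing B] (I : Ideal B) [IsAdicComplete I B] {x : B}
    (hx : x ∈ I) (Q : Polynomial B) : ∃ z, z = x * Q.eval z := by
  let z : ℕ → B := fun n => (fun y => x * Q.eval y)^[n] 0
  have z_succ (n) : z (n + 1) = x * Q.eval (z n) := Function.iterate_succ_apply' _ _ _
  have z_succ_sub_mem (n) : z (n + 1) - z n ∈ I ^ n := by
    induction n with
    | zero => simp
    | succ n ih =>
      have step : z (n + 2) - z (n + 1) = x * (Q.eval (z (n + 1)) - Q.eval (z n)) := by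
        rw [mul_sub, ← z_succ, ← z_succ]
      rw [step, pow_succ']
      exact Ideal.mul_mem_mul hx (Ideal.mem_of_dvd _ (Polynomial.sub_dvd_eval_sub _ _ _) ih)
  have z_cauchy {m n : ℕ} (hmn : m ≤ n) : z m ≡ z n [SMOD (I ^ m • ⊤ : Submodule B B)] := by
    induction n, hmn using Nat.le_induction with
    | base => rfl
    | succ n hmn ih =>
      refine ih.trans (SModEq.symm ?_)
      rw [SModEq.sub_mem, smul_eq_mul, Ideal.mul_top]
      exact Ideal.pow_le_pow_right hmn (z_succ_sub_mem n)
  obtain ⟨y, hy⟩ := IsPrecomplete.prec (I := I) inferInstance z_cauchy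
  simp only [SModEq.sub_mem, smul_eq_mul, Ideal.mul_top] at hy
  refine ⟨y, sub_eq_zero.1 (IsHausdorff.haus (I := I) inferInstance _ fun n => ?_)⟩
  rw [SModEq.zero, smul_eq_mul, Ideal.mul_top]
  have split : y - x * Q.eval y = -(z (n + 1) - y) + x * (Q.eval (z n) - Q.eval y) := by
    rw [z_succ]; ring
  rw [split]
  exact Ideal.add_mem _ (neg_mem (Ideal.pow_le_pow_right n.le_succ (hy (n + 1))))
    (Ideal.mul_mem_left _ _ (Ideal.mem_of_dvd _ (Polynomial.sub_dvd_eval_sub _ _ _) (hy n)))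

-- Substituting `u = G'(t) x y` into the Taylor expansion of `G` at `t` and dividing by `G'(t)² x`
-- leaves the fixed point equation `y = -x (e + y² r(u))`.
theorem exists_eval_eq_zero_of_sq_dvd {B : Type*} [CommRing B] (I : Ideal B) [IsAdicComplete I B]
    {x : B} (hx : x ∈ I) (G : Polynomial B) {t : B}
    (hdvd : (G.derivative.eval t * x) ^ 2 ∣ G.eval t) :
    ∃ z, G.eval (t + G.derivative.eval t * x ^ 2 * z) = 0 := by
  obtain ⟨e, he⟩ := hdvd
  set γ := G.derivative.eval t
  let r := (Polynomial.taylor t G).divX.divX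
  have taylor_eq : Polynomial.taylor t G =
      r * Polynomial.X ^ 2 + Polynomial.C γ * Polynomial.X + Polynomial.C (G.eval t) := by
    conv_lhs => rw [← Polynomial.divX_mul_X_add (Polynomial.taylor t G),
      ← Polynomial.divX_mul_X_add (Polynomial.taylor t G).divX]
    rw [Polynomial.coeff_divX, Polynomial.taylor_coeff_one, Polynomial.taylor_coeff_zero]
    ring
  have eval_add (u) : G.eval (t + u) = r.eval u * u ^ 2 + γ * u + G.eval t := by
    rw [add_comm, ← Polynomial.taylor_eval, taylor_eq]
    simp
  obtain ⟨y, hy⟩ := exists_eq_mul_eval I hx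
    (-(Polynomial.C e + Polynomial.X ^ 2 * r.comp (Polynomial.C (γ * x) * Polynomial.X)))
  simp only [Polynomial.eval_neg, Polynomial.eval_add, Polynomial.eval_mul, Polynomial.eval_pow,
    Polynomial.eval_C, Polynomial.eval_X, Polynomial.eval_comp] at hy
  refine ⟨-(e + y ^ 2 * r.eval (γ * x * y)), ?_⟩
  have u_eq : γ * x ^ 2 * -(e + y ^ 2 * r.eval (γ * x * y)) = γ * x * y := by
    rw [sq x, ← mul_assoc, mul_assoc (γ * x), ← hy]
  rw [u_eq, eval_add, he]
  linear_combination γ ^ 2 * x * hy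

theorem exists_ringHom_eq_zero_of_sq_dvd {Z B : Type*} [CommRing Z] [CommRing B] (I : Ideal B)
    [IsAdicComplete I B] {x : B} (hx : x ∈ I) (η : Polynomial Z →+* B) {G : Polynomial Z}
    (hdvd : (η G.derivative * x) ^ 2 ∣ η G) :
    ∃ η' : Polynomial Z →+* B, η' G = 0 ∧ (∀ z, η' (Polynomial.C z) = η (Polynomial.C z)) ∧
      ∀ Q, η G.derivative * x ^ 2 ∣ η' Q - η Q := by
  let y : Z →+* B := η.comp Polynomial.C
  have η_apply (Q : Polynomial Z) : η Q = (Q.map y).eval (η Polynomial.X) := by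
    rw [Polynomial.eval_map, ← Polynomial.coe_eval₂RingHom]
    exact RingHom.congr_fun (Polynomial.ringHom_ext (by simp [y]) (by simp)) Q
  have derivative_eval : (G.map y).derivative.eval (η Polynomial.X) = η G.derivative := by
    rw [Polynomial.derivative_map, ← η_apply]
  obtain ⟨z, hz⟩ := exists_eval_eq_zero_of_sq_dvd I hx (G.map y) (t := η Polynomial.X) (by
    rwa [derivative_eval, ← η_apply])
  set t := η Polynomial.X + (G.map y).derivative.eval (η Polynomial.X) * x ^ 2 * z with ht
  refine ⟨Polynomial.eval₂RingHom y t, ?_, by simp [y], fun Q => ?_⟩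
  · rwa [Polynomial.coe_eval₂RingHom, ← Polynomial.eval_map]
  · rw [η_apply Q, Polynomial.coe_eval₂RingHom, ← Polynomial.eval_map]
    refine Dvd.dvd.trans ?_ (Polynomial.sub_dvd_eval_sub t (η Polynomial.X) (Q.map y))
    exact ⟨z, by rw [ht, derivative_eval, add_sub_cancel_left]⟩

lemma exists_comp_eq_of_mem_range {σ A B : Type*} [CommRing A] [CommRing B] (f : A →+* B)
    (η : Polynomial (MvPolynomial σ ℤ) →+* B)
    (hσ : ∀ i, η (Polynomial.C (MvPolynomial.X i)) ∈ f.range) (hX : η Polynomial.X ∈ f.range) :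
    ∃ η₀ : Polynomial (MvPolynomial σ ℤ) →+* A, f.comp η₀ = η := by
  choose y hy using hσ
  obtain ⟨θ, hθ⟩ := hX
  refine ⟨Polynomial.eval₂RingHom (MvPolynomial.eval₂Hom (Int.castRingHom A) y) θ,
    Polynomial.ringHom_ext' (MvPolynomial.ringHom_ext (by simp) fun i => ?_) ?_⟩
  · simpa using hy i
  · simpa using hθ

lemma exists_finite_forall_mem_range_map_subtype {R : Type*} [CommRing R]
    {F : Set (Polynomial R)} (hF : F.Finite) :
    ∃ S : Set R, S.Finite ∧ ∀ R₀ : Subring R, S ⊆ R₀ →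
      ∀ f ∈ F, f ∈ (Polynomial.mapRingHom R₀.subtype).range := by
  refine ⟨⋃ f ∈ F, (f.coeffs : Set R), hF.biUnion fun f _ => f.coeffs.finite_toSet,
    fun R₀ hR₀ f hf => ?_⟩
  rw [Polynomial.mem_map_range]
  intro n
  rw [Subring.range_subtype]
  by_cases hn : f.coeff n = 0
  · exact hn ▸ zero_mem _
  · exact hR₀ (Set.mem_biUnion hf (Polynomial.coeff_mem_coeffs hn))

namespace HypersurfacePresentation

variable {σ ι W : Type*} [CommRing W] {w : ι → W}

/-- A polynomial approximation, with coefficients in `R`, of a point of a presented hypersurface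
with values in `R⟦X⟧`. The relation vanishes modulo the square of `modulus`, and `modulus` is, up to
a power series unit, `X` times the derivative and the denominator: enough for Newton iteration to
reach a genuine point. -/
structure ApproxSolution (P : HypersurfacePresentation σ w) (R : Type*) [CommRing R] where
  eval : Polynomial (MvPolynomial σ ℤ) →+* Polynomial R
  modulus : Polynomial R
  cofactor : Polynomial R
  approx : ι → Polynomial R
  monic_modulus : modulus.Monic
  isUnit_coeff_zero_cofactor : IsUnit (cofactor.coeff 0)
  sq_dvd_eval_relation : modulus ^ 2 ∣ eval P.relation
  eval_derivative_mul : eval (P.relation.derivative * Polynomial.C P.denom) * Polynomial.X =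
    modulus * cofactor
  sq_dvd_eval_num_sub : ∀ i, modulus ^ 2 ∣ eval (P.num i) - eval (Polynomial.C P.denom) * approx i

namespace ApproxSolution

variable {P : HypersurfacePresentation σ w}

/-- Change of coefficients of an approximate solution. -/
noncomputable def map {R R' : Type*} [CommRing R] [CommRing R'] (H : P.ApproxSolution R)
    (f : R →+* R') : P.ApproxSolution R' where
  eval := (Polynomial.mapRingHom f).comp H.eval
  modulus := H.modulus.map f
  cofactor := H.cofactor.map f
  approx i := (H.approx i).map f
  monic_modulus := H.monic_modulus.map f
  isUnit_coeff_zero_cofactor := by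
    rw [Polynomial.coeff_map]
    exact H.isUnit_coeff_zero_cofactor.map f
  sq_dvd_eval_relation := by
    simpa using map_dvd (Polynomial.mapRingHom f) H.sq_dvd_eval_relation
  eval_derivative_mul := by
    simpa using congrArg (Polynomial.mapRingHom f) H.eval_derivative_mul
  sq_dvd_eval_num_sub i := by
    simpa using map_dvd (Polynomial.mapRingHom f) (H.sq_dvd_eval_num_sub i)

theorem exists_finite_forall_subring [Finite σ] [Finite ι] {R : Type*} [CommRing R]
    (H : P.ApproxSolution R) :
    ∃ S : Set R, S.Finite ∧ ∀ R₀ : Subring R, S ⊆ R₀ →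
      ∃ H₀ : P.ApproxSolution R₀, ∀ i, (H₀.approx i).map R₀.subtype = H.approx i := by
  obtain ⟨q, hq⟩ := H.sq_dvd_eval_relation
  choose c hc using H.sq_dvd_eval_num_sub
  obtain ⟨v, hv⟩ := H.isUnit_coeff_zero_cofactor.exists_right_inv
  let F : Set (Polynomial R) :=
    Set.range (fun i => H.eval (Polynomial.C (MvPolynomial.X i))) ∪
      {H.eval Polynomial.X, H.modulus, H.cofactor, q, Polynomial.C v} ∪
      Set.range H.approx ∪ Set.range c
  have hF : F.Finite :=
    (((Set.finite_range _).union (Set.toFinite _)).union (Set.finite_range _)).union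
      (Set.finite_range _)
  obtain ⟨S, hS, mem_range⟩ := exists_finite_forall_mem_range_map_subtype hF
  refine ⟨S, hS, fun R₀ hR₀ => ?_⟩
  let κ := Polynomial.mapRingHom R₀.subtype
  have κ_injective : Function.Injective κ := Polynomial.map_injective _ Subtype.val_injective
  replace mem_range := mem_range R₀ hR₀
  obtain ⟨η, hη⟩ := exists_comp_eq_of_mem_range κ H.eval
    (fun i => mem_range _ (by simp [F])) (mem_range _ (by simp [F]))
  have κ_η (Q) : κ (η Q) = H.eval Q := RingHom.congr_fun hη Q
  obtain ⟨α, hα⟩ := mem_range H.modulus (by simp [F])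
  obtain ⟨u, hu⟩ := mem_range H.cofactor (by simp [F])
  obtain ⟨q₀, hq₀⟩ := mem_range q (by simp [F])
  obtain ⟨v₀, hv₀⟩ := mem_range (Polynomial.C v) (by simp [F])
  choose b hb using fun i => mem_range (H.approx i) (by simp [F])
  choose c₀ hc₀ using fun i => mem_range (c i) (by simp [F])
  refine ⟨⟨η, α, u, b, ?_, ?_, ⟨q₀, κ_injective ?_⟩, κ_injective ?_,
    fun i => ⟨c₀ i, κ_injective ?_⟩⟩, hb⟩
  · exact Polynomial.monic_of_injective Subtype.val_injective (hα ▸ H.monic_modulus)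
  · have coeff_v₀ : (v₀.coeff 0 : R) = v := by simpa [κ] using congrArg (Polynomial.coeff · 0) hv₀
    have coeff_u : (u.coeff 0 : R) = H.cofactor.coeff 0 := by simp [← hu]
    exact IsUnit.of_mul_eq_one (v₀.coeff 0)
      (Subtype.val_injective (by simp [coeff_v₀, coeff_u, hv]))
  · rw [κ_η, map_mul, map_pow, hα, hq₀, hq]
  · rw [map_mul κ, κ_η, map_mul κ, hα, hu, ← H.eval_derivative_mul]
    simp [κ]
  · rw [map_sub, map_mul, map_mul, map_pow, κ_η, κ_η, hα, hb, hc₀, hc]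

theorem exists_powerSeries_solution {R : Type*} [CommRing R] [IsDomain R]
    (H : P.ApproxSolution R) :
    ∃ η : Polynomial (MvPolynomial σ ℤ) →+* PowerSeries R,
      η P.relation = 0 ∧ η (Polynomial.C P.denom) ≠ 0 ∧ ∃ b : ι → PowerSeries R,
        (∀ i, η (Polynomial.C P.denom) * b i = η (P.num i)) ∧
          ∀ i, PowerSeries.X ^ 2 ∣ b i - (H.approx i : PowerSeries R) := by
  let κ : Polynomial R →+* PowerSeries R := Polynomial.coeToPowerSeries.ringHom
  set γ := κ (H.eval P.relation.derivative) with hγ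
  set h := κ (H.eval (Polynomial.C P.denom)) with hh
  obtain ⟨q, hq⟩ := H.sq_dvd_eval_relation
  choose c hc using H.sq_dvd_eval_num_sub
  obtain ⟨v, hv⟩ : ∃ v, κ H.cofactor * v = 1 := by
    refine IsUnit.exists_right_inv (PowerSeries.isUnit_iff_constantCoeff.2 ?_)
    simpa [κ] using H.isUnit_coeff_zero_cofactor
  have modulus_eq : κ H.modulus = γ * h * PowerSeries.X * v := by
    have := congrArg κ H.eval_derivative_mul
    rw [map_mul, map_mul, map_mul, map_mul, ← hγ, ← hh,
      show κ Polynomial.X = PowerSeries.X by simp [κ]] at this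
    linear_combination -κ H.modulus * hv - v * this
  have h_ne_zero : h ≠ 0 := by
    intro h0
    refine H.monic_modulus.ne_zero (Polynomial.coe_injective R ?_)
    rw [h0, mul_zero, zero_mul, zero_mul] at modulus_eq
    simpa [κ] using modulus_eq
  obtain ⟨η, η_relation, η_C, η_sub_dvd⟩ :=
    exists_ringHom_eq_zero_of_sq_dvd (Ideal.span {PowerSeries.X})
      (Ideal.mul_mem_left _ h (Ideal.mem_span_singleton_self PowerSeries.X)) (κ.comp H.eval)
      (G := P.relation) ⟨v ^ 2 * κ q, by
        simp only [RingHom.comp_apply, hq, map_mul, map_pow, modulus_eq, ← hγ]; ring⟩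
  choose e he using fun i => η_sub_dvd (P.num i)
  simp only [RingHom.comp_apply, ← hγ] at η_C he
  refine ⟨η, η_relation, by rwa [η_C], fun i => κ (H.approx i) +
      PowerSeries.X ^ 2 * (h * (γ ^ 2 * v ^ 2 * κ (c i) + γ * e i)),
    fun i => ?_, fun i => ⟨_, add_sub_cancel_left _ _⟩⟩
  have hci := congrArg κ (hc i)
  rw [map_sub, map_mul, map_mul, map_pow, modulus_eq, ← hh] at hci
  rw [η_C]
  linear_combination -hci - he i

end ApproxSolution

theorem exists_ringHom_of_approxSolution {P : HypersurfacePresentation σ w}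
    (hw : Subring.closure (Set.range w) = ⊤) {R : Type*} [CommRing R] [IsDomain R]
    (H : P.ApproxSolution R) :
    ∃ ψ : W →+* PowerSeries R, ∀ i, PowerSeries.X ^ 2 ∣ ψ (w i) - (H.approx i : PowerSeries R) := by
  obtain ⟨η, hη, hden, b, hb, hdvd⟩ := H.exists_powerSeries_solution
  obtain ⟨ψ, hψ⟩ := P.exists_ringHom hw hη (mem_nonZeroDivisors_of_ne_zero hden) hb
  exact ⟨ψ, fun i => hψ i ▸ hdvd i⟩

end HypersurfacePresentation

section Weierstrass

variable {A : Type*} [CommRing A] {I : Ideal A} [IsAdicComplete I A] {α : Polynomial A}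

lemma exists_coe_dvd_coe_sub (hα : α.IsDistinguishedAt I) (f : PowerSeries A) :
    ∃ r : Polynomial A, (α : PowerSeries A) ∣ r - f := by
  obtain ⟨z, hz⟩ := hα.algEquivQuotient.surjective (Ideal.Quotient.mk _ f)
  obtain ⟨r, rfl⟩ := Ideal.Quotient.mk_surjective z
  exact ⟨r, Ideal.mem_span_singleton.1 ((Ideal.Quotient.mk_eq_mk_iff_sub_mem _ _).1 hz)⟩

lemma exists_ringHom_coe_dvd_coe_sub {σ : Type*} (hα : α.IsDistinguishedAt I)
    (ρ : Polynomial (MvPolynomial σ ℤ) →+* PowerSeries A) :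
    ∃ η : Polynomial (MvPolynomial σ ℤ) →+* Polynomial A,
      ∀ Q, (α : PowerSeries A) ∣ η Q - ρ Q := by
  let π := Ideal.Quotient.mk (Ideal.span {(α : PowerSeries A)})
  have surjective : Function.Surjective (π.comp Polynomial.coeToPowerSeries.ringHom) :=
    hα.algEquivQuotient.surjective.comp Ideal.Quotient.mk_surjective
  obtain ⟨η, hη⟩ := exists_comp_eq_of_mem_range _ (π.comp ρ)
    (fun _ => surjective _) (surjective _)
  exact ⟨η, fun Q => Ideal.mem_span_singleton.1
    ((Ideal.Quotient.mk_eq_mk_iff_sub_mem _ _).1 (RingHom.congr_fun hη Q))⟩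

lemma coe_dvd_coe_iff_of_isDistinguishedAt (hα : α.IsDistinguishedAt I) {f : Polynomial A} :
    (α : PowerSeries A) ∣ f ↔ α ∣ f := by
  rw [← Ideal.mem_span_singleton, ← Ideal.mem_span_singleton, ← Ideal.Quotient.eq_zero_iff_mem,
    ← Ideal.Quotient.eq_zero_iff_mem, ← map_eq_zero_iff _ hα.algEquivQuotient.injective]
  rfl

lemma exists_eq_mul_and_isUnit_coeff_zero [IsDomain A] (hα : α.IsDistinguishedAt I)
    (hα₀ : α.coeff 0 = 0) {u : PowerSeries A} (hu : IsUnit u) {f : Polynomial A}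
    (hf : (α : PowerSeries A) ^ 2 ∣ f - α * u) : ∃ v, f = α * v ∧ IsUnit (v.coeff 0) := by
  obtain ⟨e, he⟩ := hf
  have f_eq : (f : PowerSeries A) = α * (u + α * e) := by linear_combination he
  obtain ⟨v, rfl⟩ := (coe_dvd_coe_iff_of_isDistinguishedAt hα).1 ⟨_, f_eq⟩
  have v_eq : (v : PowerSeries A) = u + α * e := by
    rw [Polynomial.coe_mul] at f_eq
    exact mul_left_cancel₀ (by simpa using hα.monic.ne_zero) f_eq
  refine ⟨v, rfl, ?_⟩
  have := congrArg PowerSeries.constantCoeff v_eq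
  rw [map_add, map_mul, Polynomial.constantCoeff_coe, Polynomial.constantCoeff_coe, hα₀, zero_mul,
    add_zero] at this
  exact this ▸ hu.map _

end Weierstrass

theorem HypersurfacePresentation.exists_approxSolution {σ ι W A : Type*} [CommRing W] [CommRing A]
    [IsDomain A] [IsLocalRing A] [IsAdicComplete (IsLocalRing.maximalIdeal A) A] {w : ι → W}
    (P : HypersurfacePresentation σ w) (ρ : W →+* PowerSeries A)
    (hρ : (ρ (P.eval (P.relation.derivative * Polynomial.C P.denom)) * PowerSeries.X).map
      (IsLocalRing.residue A) ≠ 0) :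
    ∃ H : P.ApproxSolution A,
      ∀ i (β : Polynomial A), (β : PowerSeries A) = ρ (w i) → H.approx i = β := by
  classical
  obtain ⟨α, u, hα⟩ := PowerSeries.exists_isWeierstrassFactorization hρ
  have hα₁ := hα.isDistinguishedAt
  have hα₂ : (α ^ 2).IsDistinguishedAt (IsLocalRing.maximalIdeal A) := sq α ▸ hα₁.mul hα₁
  have α_coeff_zero : α.coeff 0 = 0 := by
    have := congrArg PowerSeries.constantCoeff hα.eq_mul
    rw [map_mul PowerSeries.constantCoeff, map_mul PowerSeries.constantCoeff,
      PowerSeries.constantCoeff_X, mul_zero, Polynomial.constantCoeff_coe] at this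
    exact (mul_eq_zero.1 this.symm).resolve_right (hα.isUnit.map PowerSeries.constantCoeff).ne_zero
  obtain ⟨η, hη⟩ := exists_ringHom_coe_dvd_coe_sub hα₂ (ρ.comp P.eval)
  simp only [RingHom.comp_apply] at hη
  have exists_approx (i) : ∃ r : Polynomial A,
      ((α ^ 2 : Polynomial A) : PowerSeries A) ∣ r - ρ (w i) ∧
      ∀ β : Polynomial A, (β : PowerSeries A) = ρ (w i) → r = β := by
    by_cases hi : ∃ β : Polynomial A, (β : PowerSeries A) = ρ (w i)
    · obtain ⟨β, hβ⟩ := hi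
      exact ⟨β, by simp [hβ], fun β' hβ' => Polynomial.coe_injective A (hβ.trans hβ'.symm)⟩
    · obtain ⟨r, hr⟩ := exists_coe_dvd_coe_sub hα₂ (ρ (w i))
      exact ⟨r, hr, fun β hβ => absurd ⟨β, hβ⟩ hi⟩
  choose b hb b_eq using exists_approx
  obtain ⟨v, hv, hv₀⟩ := exists_eq_mul_and_isUnit_coeff_zero hα₁ α_coeff_zero hα.isUnit
    (f := η (P.relation.derivative * Polynomial.C P.denom) * Polynomial.X) (by
      rw [← hα.eq_mul, Polynomial.coe_mul, Polynomial.coe_X, ← sub_mul, ← Polynomial.coe_pow]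
      exact (hη _).mul_right _)
  refine ⟨⟨η, α, v, b, hα₁.monic, hv₀, ?_, hv, fun i => ?_⟩, b_eq⟩
  · rw [← coe_dvd_coe_iff_of_isDistinguishedAt hα₂]
    simpa [P.eval_relation] using hη P.relation
  · rw [← coe_dvd_coe_iff_of_isDistinguishedAt hα₂]
    obtain ⟨e₁, he₁⟩ := hη (P.num i)
    obtain ⟨e₂, he₂⟩ := hη (Polynomial.C P.denom)
    obtain ⟨e₃, he₃⟩ := hb i
    rw [← P.eval_denom_mul, map_mul] at he₁
    refine ⟨e₁ - e₂ * b i - ρ (P.eval (Polynomial.C P.denom)) * e₃, ?_⟩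
    rw [Polynomial.coe_sub, Polynomial.coe_mul]
    linear_combination he₁ - he₂ * b i - ρ (P.eval (Polynomial.C P.denom)) * he₃

end ApproximateSolutions

section PowerSeriesRings

lemma mem_span_range_X_of_constantCoeff_eq_zero {K : Type*} [CommRing K] {d : ℕ}
    {f : MvPowerSeries (Fin d) K} (hf : MvPowerSeries.constantCoeff f = 0) :
    f ∈ Ideal.span (Set.range (MvPowerSeries.X : Fin d → MvPowerSeries (Fin d) K)) := by
  induction d with
  | zero =>
    have f_eq_zero : f = 0 := by
      ext n
      rwa [Subsingleton.elim n 0, MvPowerSeries.coeff_zero_eq_constantCoeff_apply]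
    exact f_eq_zero ▸ zero_mem _
  | succ d ih =>
    let e := MvPowerSeries.finSuccEquiv K d
    let ι : MvPowerSeries (Fin d) K →+* MvPowerSeries (Fin (d + 1)) K :=
      (e.symm : _ →+* _).comp PowerSeries.C
    have ι_X (j) : ι (MvPowerSeries.X j) = MvPowerSeries.X j.succ := by
      change e.symm (PowerSeries.C (MvPowerSeries.X j)) = _
      rw [← MvPowerSeries.finSuccEquiv_X_succ, e.symm_apply_apply]
    have constantCoeff_eq_zero :
        MvPowerSeries.constantCoeff (PowerSeries.constantCoeff (e f)) = 0 := by
      rw [← PowerSeries.coeff_zero_eq_constantCoeff_apply,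
        ← MvPowerSeries.coeff_zero_eq_constantCoeff_apply, MvPowerSeries.coeff_coeff_finSuccEquiv,
        Finsupp.cons_zero_zero, MvPowerSeries.coeff_zero_eq_constantCoeff_apply, hf]
    have mem_map : ι (PowerSeries.constantCoeff (e f)) ∈
        Ideal.span (Set.range (MvPowerSeries.X : Fin (d + 1) → MvPowerSeries (Fin (d + 1)) K)) := by
      refine Ideal.span_le.2 ?_ (Ideal.map_span ι _ ▸ Ideal.mem_map_of_mem ι
        (ih constantCoeff_eq_zero))
      rintro _ ⟨_, ⟨j, rfl⟩, rfl⟩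
      exact ι_X j ▸ Ideal.subset_span ⟨_, rfl⟩
    have f_eq : f = MvPowerSeries.X 0 *
        e.symm (PowerSeries.mk fun n => PowerSeries.coeff (n + 1) (e f)) +
          ι (PowerSeries.constantCoeff (e f)) := by
      apply e.injective
      rw [map_add, map_mul, MvPowerSeries.finSuccEquiv_X_zero, e.apply_symm_apply]
      exact (PowerSeries.eq_X_mul_shift_add_const (e f)).trans
        (congrArg _ (e.apply_symm_apply _).symm)
    rw [f_eq]
    exact Ideal.add_mem _ (Ideal.mul_mem_right _ _ (Ideal.subset_span ⟨0, rfl⟩)) mem_map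

lemma maximalIdeal_mvPowerSeries_eq_span {K : Type*} [Field K] (d : ℕ) :
    IsLocalRing.maximalIdeal (MvPowerSeries (Fin d) K) =
      Ideal.span (Set.range (MvPowerSeries.X : Fin d → MvPowerSeries (Fin d) K)) := by
  refine le_antisymm (fun f hf => mem_span_range_X_of_constantCoeff_eq_zero ?_)
    (Ideal.span_le.2 ?_)
  · simpa [MvPowerSeries.isUnit_iff_constantCoeff] using hf
  · rintro _ ⟨j, rfl⟩
    simp [MvPowerSeries.isUnit_iff_constantCoeff]

instance isAdicComplete_maximalIdeal_mvPowerSeries {K : Type*} [Field K] (d : ℕ) :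
    IsAdicComplete (IsLocalRing.maximalIdeal (MvPowerSeries (Fin d) K))
      (MvPowerSeries (Fin d) K) := by
  rw [maximalIdeal_mvPowerSeries_eq_span]
  infer_instance

section Homogeneous

variable {σ R : Type*} {m : ℕ}

lemma aeval_algebraMap_mul_of_isHomogeneous [CommRing R] {P : MvPolynomial σ R}
    (hP : P.IsHomogeneous m) {B : Type*} [CommRing B] [Algebra R B] (c : σ → R) (x : B) :
    MvPolynomial.aeval (fun i => algebraMap R B (c i) * x) P =
      algebraMap R B (MvPolynomial.eval c P) * x ^ m := by
  rw [MvPolynomial.aeval_def, MvPolynomial.eval₂_eq, MvPolynomial.eval_eq, map_sum,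
    Finset.sum_mul]
  refine Finset.sum_congr rfl fun e he => ?_
  have sum_eq : ∑ i ∈ e.support, e i = m := by
    rw [← Finsupp.degree_apply]
    by_contra h
    exact MvPolynomial.mem_support_iff.1 he (hP.coeff_eq_zero h)
  simp only [mul_pow, Finset.prod_mul_distrib, map_mul, map_prod, map_pow]
  rw [Finset.prod_pow_eq_pow_sum, sum_eq, mul_assoc]

lemma exists_eval_ne_zero_and_eq_one [Field R] [Infinite R] {P : MvPolynomial σ R}
    (hP : P.IsHomogeneous m) (hP₀ : P ≠ 0) (i : σ) :
    ∃ c : σ → R, c i = 1 ∧ MvPolynomial.eval c P ≠ 0 := by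
  obtain ⟨z, hz⟩ : ∃ z : σ → R, MvPolynomial.eval z (MvPolynomial.X i * P) ≠ 0 := by
    by_contra! h
    exact mul_ne_zero (MvPolynomial.X_ne_zero i) hP₀ (MvPolynomial.funext (by simpa using h))
  rw [map_mul, MvPolynomial.eval_X] at hz
  have z_ne_zero : z i ≠ 0 := left_ne_zero_of_mul hz
  refine ⟨fun j => z j * (z i)⁻¹, mul_inv_cancel₀ z_ne_zero, ?_⟩
  have := aeval_algebraMap_mul_of_isHomogeneous hP z (z i)⁻¹
  simp only [Algebra.algebraMap_self, RingHom.id_apply] at this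
  rw [← MvPolynomial.coe_aeval_eq_eval, RingHom.coe_coe, this]
  exact mul_ne_zero (right_ne_zero_of_mul hz) (pow_ne_zero _ (inv_ne_zero z_ne_zero))

lemma isHomogeneous_truncTotal_succ [Finite σ] [CommRing R] {f : MvPowerSeries σ R}
    (hf : f.order = m) :
    (f.truncTotal (m + 1)).IsHomogeneous m ∧ f.truncTotal (m + 1) ≠ 0 := by
  obtain ⟨⟨e, he, e_degree⟩, h_lt⟩ := MvPowerSeries.order_eq_nat.1 hf
  refine ⟨fun n hn => ?_, fun h => he ?_⟩
  · rw [MvPowerSeries.coeff_truncTotal_eq_ite] at hn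
    split_ifs at hn with n_degree
    · exact (DFunLike.congr_fun Finsupp.degree_eq_weight_one n).symm.trans
        (le_antisymm (Nat.lt_succ_iff.1 n_degree) (not_lt.1 fun h => hn (h_lt n h)))
    · exact absurd rfl hn
  · rw [← MvPowerSeries.coeff_truncTotal _ (e_degree.trans_lt m.lt_succ_self), h,
      MvPolynomial.coeff_zero]

end Homogeneous

variable {K : Type*} [Field K] {d : ℕ}

/-- The values of the coordinates under the shear with coefficients `c`. -/
noncomputable def shearCoord (c : Fin d → K) : Fin (d + 1) → MvPowerSeries (Fin (d + 1)) K :=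
  Fin.cons (MvPowerSeries.X 0) fun j =>
    MvPowerSeries.X j.succ + MvPowerSeries.C (c j) * MvPowerSeries.X 0

lemma constantCoeff_shearCoord (c : Fin d → K) (i : Fin (d + 1)) :
    MvPowerSeries.constantCoeff (shearCoord c i) = 0 := by
  cases i using Fin.cases <;> simp [shearCoord]

lemma hasSubst_shearCoord (c : Fin d → K) : MvPowerSeries.HasSubst (shearCoord c) :=
  MvPowerSeries.hasSubst_of_constantCoeff_zero (constantCoeff_shearCoord c)

/-- The shear `X₀ ↦ X₀`, `Xⱼ ↦ Xⱼ + cⱼ X₀` for `j ≥ 1`, with its values read as power series in `X₀`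
over the power series ring in the other variables. -/
noncomputable def shear (c : Fin d → K) :
    MvPowerSeries (Fin (d + 1)) K →+* PowerSeries (MvPowerSeries (Fin d) K) :=
  ((MvPowerSeries.finSuccEquiv K d).toAlgHom.comp
    (MvPowerSeries.substAlgHom (R := K) (hasSubst_shearCoord c))).toRingHom

lemma shear_apply (c : Fin d → K) (f : MvPowerSeries (Fin (d + 1)) K) :
    shear c f = MvPowerSeries.finSuccEquiv K d (f.subst (shearCoord c)) := by
  rw [← MvPowerSeries.substAlgHom_apply (hasSubst_shearCoord c)]
  rfl

lemma shear_X_zero (c : Fin d → K) : shear c (MvPowerSeries.X 0) = PowerSeries.X := by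
  rw [shear_apply, MvPowerSeries.subst_X (hasSubst_shearCoord c)]
  simp [shearCoord]

lemma shear_X_succ (c : Fin d → K) (j : Fin d) : shear c (MvPowerSeries.X j.succ) =
    PowerSeries.C (MvPowerSeries.X j) + PowerSeries.C (MvPowerSeries.C (c j)) * PowerSeries.X := by
  rw [shear_apply, MvPowerSeries.subst_X (hasSubst_shearCoord c)]
  simp [shearCoord]

lemma coeff_map_constantCoeff_finSuccEquiv (f : MvPowerSeries (Fin (d + 1)) K) (m : ℕ) :
    PowerSeries.coeff m ((MvPowerSeries.finSuccEquiv K d f).map MvPowerSeries.constantCoeff) =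
      MvPowerSeries.coeff (Finsupp.cons m 0) f := by
  rw [PowerSeries.coeff_map, ← MvPowerSeries.coeff_zero_eq_constantCoeff_apply,
    MvPowerSeries.coeff_coeff_finSuccEquiv]

lemma map_constantCoeff_shear_coe (c : Fin d → K) (P : MvPolynomial (Fin (d + 1)) K) :
    (shear c (P : MvPowerSeries (Fin (d + 1)) K)).map MvPowerSeries.constantCoeff =
      MvPolynomial.aeval (fun i => algebraMap K (PowerSeries K) (Fin.cons (α := fun _ => K) 1 c i) *
        PowerSeries.X) P := by
  refine RingHom.congr_fun (f := ((PowerSeries.map MvPowerSeries.constantCoeff).comp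
    (shear c)).comp MvPolynomial.coeToMvPowerSeries.ringHom) (g := (MvPolynomial.aeval _).toRingHom)
    (MvPolynomial.ringHom_ext (fun r => ?_) (Fin.cases ?_ fun j => ?_)) P
  · simp [shear]
  · simp [shear_X_zero]
  · simp [shear_X_succ]

lemma coeff_map_constantCoeff_shear (c : Fin d → K) (f : MvPowerSeries (Fin (d + 1)) K) {m : ℕ}
    (hf : (f.truncTotal (m + 1)).IsHomogeneous m) :
    PowerSeries.coeff m ((shear c f).map MvPowerSeries.constantCoeff) =
      MvPolynomial.eval (Fin.cons (α := fun _ => K) 1 c) (f.truncTotal (m + 1)) := by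
  have coeff_trunc : PowerSeries.coeff m ((shear c f).map MvPowerSeries.constantCoeff) =
      PowerSeries.coeff m ((shear c (f.truncTotal (m + 1) :)).map
        MvPowerSeries.constantCoeff) := by
    have := congrArg (MvPolynomial.coeff (Finsupp.cons m (0 : Fin d →₀ ℕ)))
      (MvPowerSeries.truncTotal_subst_eq_truncTotal_truncTotal_subst (k := m + 1) (f := f)
        (constantCoeff_shearCoord c))
    have lt : (Finsupp.cons m (0 : Fin d →₀ ℕ)).degree < m + 1 := by
      simp [Finsupp.degree_eq_sum, Fin.sum_univ_succ]
    rw [MvPowerSeries.coeff_truncTotal _ lt, MvPowerSeries.coeff_truncTotal _ lt] at this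
    rwa [shear_apply, shear_apply, coeff_map_constantCoeff_finSuccEquiv,
      coeff_map_constantCoeff_finSuccEquiv]
  rw [coeff_trunc, map_constantCoeff_shear_coe, aeval_algebraMap_mul_of_isHomogeneous hf]
  simp

theorem exists_map_residue_shear_ne_zero [Infinite K] {f : MvPowerSeries (Fin (d + 1)) K}
    (hf : f ≠ 0) :
    ∃ c : Fin d → K, (shear c f).map (IsLocalRing.residue (MvPowerSeries (Fin d) K)) ≠ 0 := by
  obtain ⟨m, hm⟩ := ENat.ne_top_iff_exists.1 (mt MvPowerSeries.order_eq_top_iff.1 hf)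
  obtain ⟨homogeneous, ne_zero⟩ := isHomogeneous_truncTotal_succ hm.symm
  obtain ⟨c, hc₀, hc⟩ := exists_eval_ne_zero_and_eq_one homogeneous ne_zero 0
  have c_eq : c = Fin.cons (α := fun _ => K) 1 (Fin.tail c) := by rw [← hc₀, Fin.cons_self_tail]
  rw [c_eq, ← coeff_map_constantCoeff_shear _ _ homogeneous, PowerSeries.coeff_map] at hc
  refine ⟨Fin.tail c, fun h => hc ?_⟩
  have := congrArg (PowerSeries.coeff m) h
  rw [PowerSeries.coeff_map, map_zero, IsLocalRing.residue_eq_zero_iff,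
    IsLocalRing.mem_maximalIdeal, mem_nonunits_iff, MvPowerSeries.isUnit_iff_constantCoeff,
    isUnit_iff_ne_zero, not_not] at this
  exact this

end PowerSeriesRings

section ReductionModP

lemma isMaximal_span_of_sq_dvd_sub {C : Type*} [CommRing C] {d : ℕ} {x c : Fin d → C}
    (hx : (Ideal.span (Set.range x)).IsMaximal) {z : Fin (d + 1) → PowerSeries C}
    (hz₀ : PowerSeries.X ^ 2 ∣ z 0 - PowerSeries.X)
    (hz : ∀ j : Fin d, PowerSeries.X ^ 2 ∣
      z j.succ - (PowerSeries.C (x j) + PowerSeries.C (c j) * PowerSeries.X)) :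
    (Ideal.span (Set.range z)).IsMaximal := by
  set J := Ideal.span (Set.range z)
  have X_mem : PowerSeries.X ∈ J := by
    obtain ⟨r, hr⟩ := hz₀
    obtain ⟨v, hv⟩ : ∃ v, (1 + PowerSeries.X * r) * v = 1 :=
      IsUnit.exists_right_inv (by simp [PowerSeries.isUnit_iff_constantCoeff])
    rw [show PowerSeries.X = z 0 * v by linear_combination -PowerSeries.X * hv - v * hr]
    exact J.mul_mem_right _ (Ideal.subset_span ⟨0, rfl⟩)
  have sub_mem (j : Fin d) : z j.succ - PowerSeries.C (x j) ∈ J := by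
    obtain ⟨r, hr⟩ := hz j
    rw [show z j.succ - PowerSeries.C (x j) =
      PowerSeries.X * (PowerSeries.C (c j) + PowerSeries.X * r) by linear_combination hr]
    exact J.mul_mem_right _ X_mem
  have J_eq : J = (Ideal.span (Set.range x)).comap PowerSeries.constantCoeff := by
    apply le_antisymm
    · refine Ideal.span_le.2 (Set.range_subset_iff.2 (Fin.cases ?_ fun j => ?_))
      · have := map_dvd PowerSeries.constantCoeff hz₀
        simp_all
      · have := map_dvd PowerSeries.constantCoeff (hz j)
        have hzj : PowerSeries.constantCoeff (z j.succ) = x j := by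
          simpa [sub_eq_zero] using this
        exact Ideal.mem_comap.2 (hzj ▸ Ideal.subset_span ⟨j, rfl⟩)
    · intro f hf
      rw [PowerSeries.eq_X_mul_shift_add_const f]
      refine J.add_mem (J.mul_mem_right _ X_mem) ?_
      have map_le : (Ideal.span (Set.range x)).map PowerSeries.C ≤ J := by
        rw [Ideal.map_span, Ideal.span_le]
        rintro _ ⟨_, ⟨j, rfl⟩, rfl⟩
        simpa using J.sub_mem (Ideal.subset_span ⟨j.succ, rfl⟩) (sub_mem j)
      exact map_le (Ideal.mem_map_of_mem _ hf)
  rw [J_eq]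
  exact Ideal.comap_isMaximal_of_surjective _ PowerSeries.constantCoeff_surj

/-- The elements `ξ` can be specialised to prime characteristic: some ring homomorphism to a
Noetherian local domain of prime characteristic and of dimension at least `d` carries them to
generators of the maximal ideal. -/
def SpecializesToCharP {d : ℕ} {W : Type u} [CommRing W] (ξ : Fin d → W) : Prop :=
  ∃ (p : ℕ) (_ : Fact p.Prime) (C : Type u) (_ : CommRing C) (_ : IsDomain C)
    (_ : IsNoetherianRing C) (_ : IsLocalRing C) (_ : CharP C p) (ψ : W →+* C),
    d ≤ ringKrullDim C ∧ (Ideal.span (Set.range fun i => ψ (ξ i))).IsMaximal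

lemma isJacobsonRing_int : IsJacobsonRing ℤ := by
  refine isJacobsonRing_iff_prime_eq.2 fun P hP => ?_
  rcases eq_or_ne P ⊥ with rfl | hP₀
  · refine eq_bot_iff.2 fun x hx => ?_
    rcases Int.isUnit_iff.1 (Ideal.mem_jacobson_bot.1 hx x) with h | h
    · simpa using (by omega : x * x = 0)
    · nlinarith
  · have := hP.isMaximal hP₀
    exact Ideal.jacobson_eq_self_of_isMaximal

lemma exists_charP_of_finiteType_int {F : Type*} [Field F] (hF : Algebra.FiniteType ℤ F) :
    ∃ p : ℕ, p.Prime ∧ CharP F p := by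
  have := isJacobsonRing_int
  have : Module.Finite ℤ F := finite_of_finite_type_of_isJacobsonRing ℤ F
  refine ⟨ringChar F, (CharP.char_is_prime_or_zero F (ringChar F)).resolve_right fun h => ?_,
    inferInstance⟩
  have := (CharP.ringChar_zero_iff_CharZero F).1 h
  exact Int.not_isField (isField_of_isIntegral_of_isField (algebraMap ℤ F).injective_int
    (Field.toIsField F))

lemma specializesToCharP_zero {W : Type u} [CommRing W] [Nontrivial W] [Algebra.FiniteType ℤ W]
    (ξ : Fin 0 → W) : SpecializesToCharP ξ := by
  obtain ⟨M, hM⟩ := Ideal.exists_maximal W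
  let F := W ⧸ M
  let _ : Field F := Ideal.Quotient.field M
  have finiteType : Algebra.FiniteType ℤ F :=
    .of_surjective (Ideal.Quotient.mkₐ ℤ M) (Ideal.Quotient.mkₐ_surjective _ _)
  obtain ⟨p, hp, _⟩ := exists_charP_of_finiteType_int finiteType
  refine ⟨p, ⟨hp⟩, F, inferInstance, inferInstance, inferInstance, inferInstance, inferInstance,
    Ideal.Quotient.mk M, by simp, ?_⟩
  rw [Set.range_eq_empty, Ideal.span_empty]
  exact Ideal.bot_isMaximal

theorem SpecializesToCharP.of_approxSolution {d : ℕ} {σ ι : Type*} {W R : Type u} [CommRing W]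
    [CommRing R] {w : ι → W} {P : HypersurfacePresentation σ w}
    (hw : Subring.closure (Set.range w) = ⊤) (H : P.ApproxSolution R) {k : Fin (d + 1) → ι}
    {x c : Fin d → R} (hx : SpecializesToCharP x) (h₀ : H.approx (k 0) = Polynomial.X)
    (hs : ∀ j : Fin d,
      H.approx (k j.succ) = Polynomial.C (x j) + Polynomial.C (c j) * Polynomial.X) :
    SpecializesToCharP fun i => w (k i) := by
  obtain ⟨p, hp, C, _, _, _, _, _, φ, hdim, hmax⟩ := hx
  obtain ⟨ψ, hψ⟩ := HypersurfacePresentation.exists_ringHom_of_approxSolution hw (H.map φ)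
  refine ⟨p, hp, PowerSeries C, inferInstance, inferInstance, inferInstance, inferInstance,
    charP_of_injective_ringHom (f := PowerSeries.C) PowerSeries.C_injective p, ψ, ?_, ?_⟩
  · refine le_trans ?_ ringKrullDim_succ_le_ringKrullDim_powerseries
    push_cast
    gcongr
  · refine isMaximal_span_of_sq_dvd_sub (c := fun j => φ (c j)) hmax ?_ fun j => ?_
    · simpa [HypersurfacePresentation.ApproxSolution.map, h₀] using hψ (k 0)
    · simpa [HypersurfacePresentation.ApproxSolution.map, hs] using hψ (k j.succ)

lemma finiteType_int_closure {R : Type*} [CommRing R] {S : Set R} (hS : S.Finite) :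
    Algebra.FiniteType ℤ (Subring.closure S) := by
  have fg : (Algebra.adjoin ℤ S).FG := Subalgebra.fg_def.2 ⟨S, hS, rfl⟩
  rw [Algebra.adjoin_int, Subalgebra.fg_iff_finiteType] at fg
  exact fg

theorem SpecializesToCharP.of_forall_subring {d : ℕ} {σ ι : Type*} [Finite σ] [Finite ι]
    {W A : Type u} [CommRing W] [CommRing A] {w : ι → W} {P : HypersurfacePresentation σ w}
    (hw : Subring.closure (Set.range w) = ⊤) (H : P.ApproxSolution A) {k : Fin (d + 1) → ι}
    {x c : Fin d → A}
    (hx : ∀ (R₀ : Subring A) [Algebra.FiniteType ℤ R₀] (x₀ : Fin d → R₀),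
      (∀ j, (x₀ j : A) = x j) → SpecializesToCharP x₀)
    (h₀ : H.approx (k 0) = Polynomial.X)
    (hs : ∀ j : Fin d,
      H.approx (k j.succ) = Polynomial.C (x j) + Polynomial.C (c j) * Polynomial.X) :
    SpecializesToCharP fun i => w (k i) := by
  obtain ⟨S, hS, descend⟩ := H.exists_finite_forall_subring
  let S' := S ∪ (Set.range x ∪ Set.range c)
  let R₀ := Subring.closure S'
  have : Algebra.FiniteType ℤ R₀ := finiteType_int_closure
    (hS.union ((Set.finite_range x).union (Set.finite_range c)))
  have hS'R₀ : S' ⊆ R₀ := Subring.subset_closure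
  obtain ⟨H₀, hH₀⟩ := descend R₀ (Set.subset_union_left.trans hS'R₀)
  let x₀ (j : Fin d) : R₀ := ⟨x j, hS'R₀ (.inr (.inl ⟨j, rfl⟩))⟩
  let c₀ (j : Fin d) : R₀ := ⟨c j, hS'R₀ (.inr (.inr ⟨j, rfl⟩))⟩
  have map_injective := Polynomial.map_injective R₀.subtype R₀.subtype_injective
  exact .of_approxSolution hw H₀ (hx R₀ x₀ fun _ => rfl) (map_injective (by simp [hH₀, h₀]))
    fun j => map_injective (a₂ := Polynomial.C (x₀ j) + Polynomial.C (c₀ j) * Polynomial.X)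
      (by simp [hH₀, hs, x₀, c₀])

lemma exists_finite_closure_eq_top (W : Type*) [CommRing W] [Algebra.FiniteType ℤ W] :
    ∃ s : Set W, s.Finite ∧ Subring.closure s = ⊤ := by
  obtain ⟨s, hs⟩ := Algebra.FiniteType.out (R := ℤ) (A := W)
  refine ⟨s, s.finite_toSet, ?_⟩
  rw [Algebra.adjoin_int] at hs
  exact congrArg Subalgebra.toSubring hs

theorem HypersurfacePresentation.exists_approxSolution_shear {σ ι W K : Type*} [CommRing W]
    [IsDomain W] [Field K] [Infinite K] {w : ι → W} (P : HypersurfacePresentation σ w) {d : ℕ}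
    {ρ : W →+* MvPowerSeries (Fin (d + 1)) K} (hρ : Function.Injective ρ) {ξ₀ : W}
    (hξ₀ : ρ ξ₀ = MvPowerSeries.X 0) :
    ∃ (c : Fin d → K) (H : P.ApproxSolution (MvPowerSeries (Fin d) K)),
      ∀ i (β : Polynomial (MvPowerSeries (Fin d) K)),
        (β : PowerSeries (MvPowerSeries (Fin d) K)) = shear c (ρ (w i)) → H.approx i = β := by
  have : IsDomain (MvPowerSeries (Fin d) K) := NoZeroDivisors.to_isDomain _
  have ξ₀_ne_zero : ξ₀ ≠ 0 := by
    rw [← map_ne_zero_iff ρ hρ, hξ₀]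
    exact fun h => one_ne_zero (α := K) (by
      rw [← MvPowerSeries.coeff_index_single_self_X (0 : Fin (d + 1)), h, map_zero])
  have hΔ : P.eval (P.relation.derivative * Polynomial.C P.denom) * ξ₀ ≠ 0 := by
    rw [map_mul]
    exact mul_ne_zero (mul_ne_zero P.eval_derivative_ne_zero P.eval_denom_ne_zero) ξ₀_ne_zero
  obtain ⟨c, hc⟩ := exists_map_residue_shear_ne_zero ((map_ne_zero_iff ρ hρ).2 hΔ)
  rw [map_mul ρ, hξ₀, map_mul (shear c), shear_X_zero] at hc
  exact ⟨c, P.exists_approxSolution ((shear c).comp ρ) hc⟩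

theorem specializesToCharP_of_injective {K : Type u} [Field K] [CharZero K] {d : ℕ} {W : Type u}
    [CommRing W] [Algebra.FiniteType ℤ W] {ρ : W →+* MvPowerSeries (Fin d) K}
    (hρ : Function.Injective ρ) {ξ : Fin d → W} (hξ : ∀ i, ρ (ξ i) = MvPowerSeries.X i) :
    SpecializesToCharP ξ := by
  induction d generalizing W with
  | zero =>
    have : Nontrivial W := ρ.domain_nontrivial
    exact specializesToCharP_zero ξ
  | succ d ih =>
    have : IsDomain (MvPowerSeries (Fin (d + 1)) K) := NoZeroDivisors.to_isDomain _
    have : IsDomain W := hρ.isDomain ρ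
    have : CharZero (MvPowerSeries (Fin (d + 1)) K) :=
      charZero_of_injective_ringHom (f := MvPowerSeries.C) MvPowerSeries.C_injective
    have : CharZero W := ρ.charZero
    have : Infinite K := CharZero.infinite K
    obtain ⟨S, hS, closure_S⟩ := exists_finite_closure_eq_top W
    have : Finite S := hS
    let w : S ⊕ Fin (d + 1) → W := Sum.elim Subtype.val ξ
    have hw : Subring.closure (Set.range w) = ⊤ := by
      rw [eq_top_iff, ← closure_S]
      exact Subring.closure_mono fun z hz => ⟨Sum.inl ⟨z, hz⟩, rfl⟩
    obtain ⟨s, hs, ⟨P⟩⟩ := HypersurfacePresentation.exists_finite w hw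
    have : Finite s := hs
    obtain ⟨c, H, approx_eq⟩ := P.exists_approxSolution_shear hρ (hξ 0)
    refine .of_forall_subring (k := Sum.inr) (x := MvPowerSeries.X)
      (c := fun j => MvPowerSeries.C (c j)) hw H
      (fun R₀ _ x₀ hx₀ => ih (ρ := R₀.subtype) R₀.subtype_injective hx₀)
      (approx_eq _ _ ?_) fun j => approx_eq _ _ ?_
    · simp [w, hξ, shear_X_zero]
    · simp [w, hξ, shear_X_succ]

end ReductionModP

section CharacteristicZero

-- A prime `Q` of `S` over the kernel of `R → C` makes `C` act faithfully on the nonzero ring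
-- `Frac C ⊗ κ(Q)`.
theorem injective_algebraMap_tensorProduct (C : Type*) {R S : Type*} [CommRing R] [CommRing S]
    [CommRing C] [IsDomain C] [Algebra R S] [Algebra R C] [Algebra.IsIntegral R S]
    (hinj : Function.Injective (algebraMap R S)) :
    Function.Injective (algebraMap C (C ⊗[R] S)) := by
  let P : Ideal R := RingHom.ker (algebraMap R C)
  have hP : P.IsPrime := RingHom.ker_isPrime _
  obtain ⟨⟨Q, hQ⟩, hQP⟩ :=
    RingHom.IsIntegral.comap_surjective (algebraMap_isIntegral_iff.2 ‹_›) hinj ⟨P, hP⟩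
  have hQP' : P = Q.comap (algebraMap R S) := (congrArg PrimeSpectrum.asIdeal hQP).symm
  let k := P.ResidueField
  let κ := FractionRing C
  let L := Q.ResidueField
  have map_eq_zero_iff (r : R) : algebraMap R κ r = 0 ↔ r ∈ P := by
    rw [IsScalarTower.algebraMap_apply R C κ, RingHom.mem_ker,
      map_eq_zero_iff _ (IsFractionRing.injective C κ)]
  let _ : Algebra k κ := (Ideal.ResidueField.lift P (algebraMap R κ)
    (fun r hr => (map_eq_zero_iff r).2 hr)
    (fun r hr => IsUnit.mk0 _ ((map_eq_zero_iff r).not.2 hr))).toAlgebra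
  have : IsScalarTower R k κ := .of_algebraMap_eq fun r =>
    (Ideal.ResidueField.lift_algebraMap ..).symm
  let _ : Algebra k L := (Ideal.ResidueField.map P Q (algebraMap R S) hQP').toAlgebra
  have : IsScalarTower R k L := .of_algebraMap_eq fun r => by
    rw [IsScalarTower.algebraMap_apply R S L]
    exact (Ideal.ResidueField.map_algebraMap ..).symm
  let F : C ⊗[R] S →ₐ[R] κ ⊗[k] L := Algebra.TensorProduct.productMap
    (Algebra.TensorProduct.includeLeft.comp (IsScalarTower.toAlgHom R C κ))
    ((Algebra.TensorProduct.includeRight.restrictScalars R).comp (IsScalarTower.toAlgHom R S L))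
  have F_comp : F ∘ algebraMap C (C ⊗[R] S) = algebraMap κ (κ ⊗[k] L) ∘ algebraMap C κ := by
    ext c
    simp [F]
  refine .of_comp (f := F) ?_
  rw [F_comp]
  exact (algebraMap κ _).injective.comp (IsFractionRing.injective C κ)

lemma exists_finite_forall_isIntegral {A T : Type*} [CommRing A] [CommRing T] [Algebra A T]
    [Algebra.IsIntegral A T] {E : Set T} (hE : E.Finite) :
    ∃ S : Set A, S.Finite ∧ ∀ R₀ : Subring A, S ⊆ R₀ → ∀ y ∈ E, IsIntegral R₀ y := by
  choose P monic_P eval_P using Algebra.IsIntegral.isIntegral (R := A) (A := T)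
  obtain ⟨S, hS, mem_range⟩ := exists_finite_forall_mem_range_map_subtype (hE.image P)
  refine ⟨S, hS, fun R₀ hR₀ y hy => ?_⟩
  obtain ⟨P₀, hP₀ : P₀.map R₀.subtype = P y⟩ := mem_range R₀ hR₀ _ ⟨y, hy, rfl⟩
  refine ⟨P₀, Polynomial.monic_of_injective R₀.subtype_injective (hP₀ ▸ monic_P y), ?_⟩
  rw [← eval_P y, ← hP₀, Polynomial.eval₂_map]
  rfl

theorem FiltrationData.pow_le_of_specializesToCharP {W : Type u} {V : Type*} [CommRing W]
    [CommRing V] [Algebra W V] [Algebra.IsIntegral W V]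
    (hinj : Function.Injective (algebraMap W V)) {d t h : ℕ} {ξ : Fin d → W}
    (hξ : SpecializesToCharP ξ) (H : FiltrationData (fun i => algebraMap W V (ξ i)) t h) :
    t ^ d ≤ h := by
  obtain ⟨p, hp, C, _, _, _, _, _, ψ, hdim, hmax⟩ := hξ
  let _ : Algebra W C := ψ.toAlgebra
  have hinj' := injective_algebraMap_tensorProduct C hinj
  have : CharP (C ⊗[W] V) p := charP_of_injective_ringHom hinj' p
  have hrad : (Ideal.span (Set.range fun i => ψ (ξ i))).radical.IsMaximal := by
    rwa [hmax.isPrime.radical]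
  refine pow_le_of_charP p hinj' hdim hrad (t := t) ?_
  have map_ξ (i) : algebraMap C (C ⊗[W] V) (ψ (ξ i)) =
      Algebra.TensorProduct.includeRight (R := W) (algebraMap W V (ξ i)) := by
    rw [AlgHom.commutes]
    rfl
  simp only [map_ξ]
  exact H.map (Algebra.TensorProduct.includeRight (R := W) (A := C) (B := V)).toRingHom

theorem FiltrationData.pow_le_of_mvPowerSeries {K : Type u} [Field K] [CharZero K] {d t h : ℕ}
    {T : Type*} [CommRing T] [Algebra (MvPowerSeries (Fin d) K) T]
    [Algebra.IsIntegral (MvPowerSeries (Fin d) K) T]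
    (hinj : Function.Injective (algebraMap (MvPowerSeries (Fin d) K) T))
    (H : FiltrationData
      (fun i => algebraMap (MvPowerSeries (Fin d) K) T (MvPowerSeries.X i)) t h) : t ^ d ≤ h := by
  obtain ⟨S, hS, isIntegral_entries⟩ :=
    exists_finite_forall_isIntegral (A := MvPowerSeries (Fin d) K) H.entries_finite
  let W := Subring.closure (S ∪ Set.range MvPowerSeries.X)
  have subset_W : S ∪ Set.range MvPowerSeries.X ⊆ W := Subring.subset_closure
  have : Algebra.FiniteType ℤ W := finiteType_int_closure (hS.union (Set.finite_range _))
  let ξ (i : Fin d) : W := ⟨MvPowerSeries.X i, subset_W (.inr ⟨i, rfl⟩)⟩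
  let V := integralClosure W T
  obtain ⟨H₀⟩ := nonempty_of_entries_subset_range (y := fun i => algebraMap W V (ξ i))
    V.val.toRingHom Subtype.val_injective H fun y hy =>
      ⟨⟨y, isIntegral_entries W (Set.subset_union_left.trans subset_W) y hy⟩, rfl⟩
  have hinj' : Function.Injective (algebraMap W V) := fun a b hab =>
    Subtype.ext (hinj (congrArg Subtype.val hab))
  exact H₀.pow_le_of_specializesToCharP hinj'
    (specializesToCharP_of_injective W.subtype_injective fun _ => rfl)

end CharacteristicZero

section CompleteRings

open IsLocalRing

lemma isPrecomplete_pi {A ι : Type*} [CommRing A] [Finite ι] (I : Ideal A) (M : ι → Type*)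
    [∀ j, AddCommGroup (M j)] [∀ j, Module A (M j)] [∀ j, IsPrecomplete I (M j)] :
    IsPrecomplete I (∀ j, M j) := by
  classical
  have := Fintype.ofFinite ι
  refine AdicCompletion.of_surjective_iff.1 fun y => ?_
  choose v hv using fun j =>
    AdicCompletion.of_surjective I (M j) (AdicCompletion.piEquivOfFintype I M y j)
  refine ⟨v, (AdicCompletion.piEquivOfFintype I M).injective (funext fun j => ?_)⟩
  rw [← hv j, AdicCompletion.piEquivOfFintype_apply]
  exact AdicCompletion.map_of ..

theorem finite_of_forall_exists_sub_mem_map {A D : Type*} [CommRing A] [CommRing D] [Algebra A D]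
    {I : Ideal A} [IsPrecomplete I A] [IsHausdorff (I.map (algebraMap A D)) D]
    {F : Submodule A D} (hF : F.FG)
    (h : ∀ z, ∃ f ∈ F, z - f ∈ I.map (algebraMap A D)) : Module.Finite A D := by
  have : Module.Finite A F := Module.Finite.iff_fg.2 hF
  obtain ⟨n, g, hg⟩ := Module.Finite.exists_fin' A F
  have := isPrecomplete_pi I fun _ : Fin n => A
  have : IsHausdorff I D := IsHausdorff.map_algebraMap_iff.1 ‹_›
  refine Module.Finite.of_surjective (F.subtype ∘ₗ g)
    (surjective_of_mkQ_comp_surjective (I := I) fun z => ?_)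
  obtain ⟨z, rfl⟩ := Submodule.mkQ_surjective _ z
  obtain ⟨f, hf, sub_mem⟩ := h z
  obtain ⟨v, hv⟩ := hg ⟨f, hf⟩
  refine ⟨v, Eq.symm ((Submodule.Quotient.eq _).2 ?_)⟩
  rw [LinearMap.comp_apply, hv, Ideal.smul_top_eq_map]
  exact sub_mem

lemma exists_fg_forall_exists_sub_mem_pow {K D : Type*} [CommRing K] [CommRing D] [Algebra K D]
    {m : Ideal D} (hm : m.FG) (h : ∀ z : D, ∃ a : K, z - algebraMap K D a ∈ m) (n : ℕ) :
    ∃ F : Submodule K D, F.FG ∧ ∀ z, ∃ f ∈ F, z - f ∈ m ^ n := by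
  obtain ⟨G, rfl⟩ := hm
  induction n with
  | zero => exact ⟨⊥, Submodule.fg_bot, fun z => ⟨0, zero_mem _, by simp⟩⟩
  | succ n ih =>
    obtain ⟨F, hF, approx⟩ := ih
    choose f f_mem sub_mem using approx
    refine ⟨1 ⊔ F * Submodule.span K (G : Set D), ?_, fun z => ?_⟩
    · exact .sup (Submodule.one_eq_span (R := K) (A := D) ▸ Submodule.fg_span_singleton _)
        (hF.mul ⟨G, rfl⟩)
    · obtain ⟨a, ha⟩ := h z
      obtain ⟨b, -, hb⟩ := Submodule.mem_span_finset.1 ha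
      refine ⟨algebraMap K D a + ∑ g ∈ G, f (b g) * g,
        add_mem (Submodule.mem_sup_left (Submodule.algebraMap_mem a))
          (Submodule.mem_sup_right (sum_mem fun g hg =>
            Submodule.mul_mem_mul (f_mem _) (Submodule.subset_span hg))), ?_⟩
      rw [← sub_sub, ← hb, ← Finset.sum_sub_distrib]
      refine sum_mem fun g hg => ?_
      rw [smul_eq_mul, ← sub_mul, pow_succ]
      exact Ideal.mul_mem_mul (sub_mem _) (Submodule.subset_span hg)

theorem exists_mvPowerSeries_ringHom {σ K D : Type*} [Finite σ] [CommRing K] [CommRing D]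
    (s : K →+* D) {m : Ideal D} [IsAdicComplete m D] {x : σ → D} (hx : ∀ i, x i ∈ m) :
    ∃ φ : MvPowerSeries σ K →+* D,
      (∀ i, φ (MvPowerSeries.X i) = x i) ∧ ∀ a, φ (MvPowerSeries.C a) = s a := by
  let _ : WithIdeal D := ⟨m⟩
  let _ : UniformSpace K := ⊥
  have : DiscreteUniformity K := ⟨rfl⟩
  obtain ⟨_, _⟩ := (IsAdic.isAdicComplete_iff (I := m) rfl).1 ‹_›
  have hasEval : MvPowerSeries.HasEval x :=
    ⟨fun i => ((m.hasBasis_nhds_zero_adic).tendsto_right_iff).2 fun n _ =>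
      Filter.eventually_atTop.2 ⟨n, fun k hk => Ideal.pow_le_pow_right hk
        (Ideal.pow_mem_pow (hx i) k)⟩, by simp⟩
  refine ⟨MvPowerSeries.eval₂Hom (φ := s) continuous_of_discreteTopology hasEval,
    fun i => ?_, fun a => ?_⟩
  · rw [MvPowerSeries.coe_eval₂Hom, MvPowerSeries.eval₂_X]
  · rw [MvPowerSeries.coe_eval₂Hom, MvPowerSeries.eval₂_C]

lemma ringKrullDim_le_of_isIntegral {A D : Type*} [CommRing A] [CommRing D] [Algebra A D]
    [Algebra.IsIntegral A D] : ringKrullDim D ≤ ringKrullDim A :=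
  Order.krullDim_le_of_strictMono (PrimeSpectrum.comap (algebraMap A D)) fun P Q hPQ =>
    Ideal.IsIntegral.comap_lt_comap (R := A) (I := P.asIdeal) (J := Q.asIdeal) hPQ

lemma ringKrullDim_mvPowerSeries_le (K : Type*) [Field K] (d : ℕ) :
    ringKrullDim (MvPowerSeries (Fin d) K) ≤ d := by
  refine (ringKrullDim_le_spanFinrank_maximalIdeal _).trans (Nat.cast_le.2 ?_)
  rw [maximalIdeal_mvPowerSeries_eq_span]
  refine (Submodule.spanFinrank_span_le_ncard_of_finite (Set.finite_range _)).trans ?_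
  rw [← Set.image_univ]
  simpa using Set.ncard_image_le (f := (MvPowerSeries.X : Fin d → MvPowerSeries (Fin d) K))
    Set.finite_univ

theorem exists_residue_section (D : Type*) [CommRing D] [IsLocalRing D]
    [IsAdicComplete (maximalIdeal D) D] [Algebra ℚ D] :
    ∃ s : ResidueField D →+* D, ∀ a, residue D (s a) = a := by
  have : CharZero (ResidueField D) := algebraRat.charZero _
  have : Algebra.FormallySmooth ℚ (ResidueField D) := by
    obtain ⟨v, hv⟩ := exists_isTranscendenceBasis ℚ (ResidueField D)
    have := hv.isAlgebraic_field
    exact Algebra.FormallySmooth.of_algebraicIndependent_of_isSeparable hv.1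
  obtain ⟨s, hs⟩ := Algebra.FormallySmooth.exists_mkₐ_comp_eq_of_isAdicComplete (R := ℚ)
    (A := ResidueField D) (S := D) (I := maximalIdeal D)
    (RingHom.toRatAlgHom (S := D ⧸ maximalIdeal D) (RingHom.id (ResidueField D)))
  exact ⟨s, DFunLike.congr_fun hs⟩

theorem mvPowerSeries_ringHom_finite {K D : Type*} [Field K] [CommRing D]
    [IsNoetherianRing D] [IsLocalRing D] {d : ℕ} {x : Fin d → D}
    (hx : (Ideal.span (Set.range x)).radical = maximalIdeal D)
    {φ : MvPowerSeries (Fin d) K →+* D} (hφX : ∀ i, φ (MvPowerSeries.X i) = x i)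
    (hφC : ∀ z, ∃ a, z - φ (MvPowerSeries.C a) ∈ maximalIdeal D) : φ.Finite := by
  let A := MvPowerSeries (Fin d) K
  let _ : Algebra A D := φ.toAlgebra
  let _ : Algebra K D := (φ.comp MvPowerSeries.C).toAlgebra
  have : IsScalarTower K A D := .of_algebraMap_eq fun _ => rfl
  have map_maximalIdeal :
      (maximalIdeal A).map (algebraMap A D) = Ideal.span (Set.range x) := by
    rw [maximalIdeal_mvPowerSeries_eq_span, Ideal.map_span, ← Set.range_comp]
    exact congrArg (fun f => Ideal.span (Set.range f)) (funext hφX)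
  have hne : Ideal.span (Set.range x) ≠ ⊤ := fun h =>
    (maximalIdeal.isMaximal D).ne_top (by rw [← hx, h, Ideal.radical_top])
  have : IsHausdorff ((maximalIdeal A).map (algebraMap A D)) D := by
    rw [map_maximalIdeal]
    exact IsHausdorff.of_isLocalRing _ _ hne
  obtain ⟨n, hn⟩ := Ideal.exists_pow_le_of_le_radical_of_fg hx.ge (IsNoetherian.noetherian _)
  obtain ⟨F, ⟨G, rfl⟩, approx⟩ :=
    exists_fg_forall_exists_sub_mem_pow (K := K) (IsNoetherian.noetherian (maximalIdeal D)) hφC n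
  refine finite_of_forall_exists_sub_mem_map (I := maximalIdeal A)
    (F := Submodule.span A (G : Set D)) ⟨G, rfl⟩ fun z => ?_
  obtain ⟨f, hf, sub_mem⟩ := approx z
  exact ⟨f, Submodule.span_le_restrictScalars K A _ hf, map_maximalIdeal ▸ hn sub_mem⟩

theorem injective_of_isIntegral_of_ringKrullDim_le {A D : Type*} [CommRing A] [IsDomain A]
    [CommRing D] {φ : A →+* D} (hφ : φ.IsIntegral) {d : ℕ} (hA : ringKrullDim A ≤ d)
    (hD : d ≤ ringKrullDim D) : Function.Injective φ := by
  rw [injective_iff_map_eq_zero]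
  intro a ha
  by_contra ha₀
  have : Algebra.IsIntegral φ.range D :=
    algebraMap_isIntegral_iff.1 (RingHom.IsIntegral.tower_top φ.rangeRestrict φ.range.subtype hφ)
  have range_lt : ringKrullDim φ.range + 1 ≤ ringKrullDim A :=
    ringKrullDim_succ_le_of_surjective φ.rangeRestrict φ.rangeRestrict_surjective
      (mem_nonZeroDivisors_of_ne_zero ha₀) (Subtype.ext ha)
  have : (d : WithBot ℕ∞) + 1 ≤ d := by
    calc (d : WithBot ℕ∞) + 1 ≤ ringKrullDim φ.range + 1 := by
          gcongr
          exact hD.trans ringKrullDim_le_of_isIntegral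
      _ ≤ d := range_lt.trans hA
  exact d.not_succ_le_self (by exact_mod_cast this)

theorem exists_finite_injective_mvPowerSeries_ringHom {D : Type*} [CommRing D]
    [IsNoetherianRing D] [IsLocalRing D] [IsAdicComplete (maximalIdeal D) D] [Algebra ℚ D] {d : ℕ}
    (hd : d ≤ ringKrullDim D) {x : Fin d → D} (hx : (Ideal.span (Set.range x)).radical.IsMaximal) :
    ∃ φ : MvPowerSeries (Fin d) (ResidueField D) →+* D,
      (∀ i, φ (MvPowerSeries.X i) = x i) ∧ φ.Finite ∧ Function.Injective φ := by
  have radical_eq := eq_maximalIdeal hx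
  obtain ⟨s, hs⟩ := exists_residue_section D
  obtain ⟨φ, hφX, hφC⟩ := exists_mvPowerSeries_ringHom s (m := maximalIdeal D) (x := x) fun i =>
    radical_eq ▸ Ideal.le_radical (Ideal.subset_span ⟨i, rfl⟩)
  have hφ : φ.Finite := mvPowerSeries_ringHom_finite radical_eq hφX fun z =>
    ⟨residue D z, by rw [← residue_eq_zero_iff, map_sub, hφC, hs, sub_self]⟩
  have : IsDomain (MvPowerSeries (Fin d) (ResidueField D)) := NoZeroDivisors.to_isDomain _
  exact ⟨φ, hφX, hφ, injective_of_isIntegral_of_ringKrullDim_le hφ.to_isIntegral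
    (ringKrullDim_mvPowerSeries_le _ d) hd⟩

end CompleteRings

section CompleteLocalDomains

open IsLocalRing

instance isNoetherianRing_adicCompletion (R : Type*) [CommRing R] [IsNoetherianRing R]
    (I : Ideal R) : IsNoetherianRing (AdicCompletion I R) := by
  have fg : I.FG := IsNoetherian.noetherian I
  obtain ⟨r, f, rfl⟩ := Submodule.fg_iff_exists_fin_generating_family.1 fg
  let I := Ideal.span (Set.range f)
  let B := AdicCompletion I R
  have := AdicCompletion.isAdicComplete_self I fg
  obtain ⟨φ, hφX, hφC⟩ := exists_mvPowerSeries_ringHom (algebraMap R B)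
    (m := I.map (algebraMap R B)) (x := fun i => algebraMap R B (f i))
    fun i => Ideal.mem_map_of_mem _ (Ideal.subset_span ⟨i, rfl⟩)
  let 𝔛 : Ideal (MvPowerSeries (Fin r) R) := Ideal.span (Set.range MvPowerSeries.X)
  have map_𝔛 : 𝔛.map φ = I.map (algebraMap R B) := by
    rw [Ideal.map_span, Ideal.map_span, ← Set.range_comp, ← Set.range_comp]
    exact congrArg (fun g => Ideal.span (Set.range g)) (funext hφX)
  have : IsHausdorff (𝔛.map φ) B := map_𝔛 ▸ inferInstance
  refine isNoetherianRing_of_surjective _ _ φ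
    (surjective_of_mk_map_comp_surjective (I := 𝔛) φ fun y => ?_)
  obtain ⟨y, rfl⟩ := Ideal.Quotient.mk_surjective y
  obtain ⟨a, ha⟩ := Ideal.Quotient.mk_surjective (AdicCompletion.evalOneₐ I y)
  refine ⟨MvPowerSeries.C a, ?_⟩
  rw [RingHom.comp_apply, hφC, Ideal.Quotient.eq, map_𝔛, ← AdicCompletion.ker_evalOneₐ_eq_map I fg,
    RingHom.mem_ker, map_sub, sub_eq_zero]
  exact ha

theorem isAdicComplete_maximalIdeal_of_surjective {B D : Type*} [CommRing B] [CommRing D]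
    [IsLocalRing B] [IsLocalRing D] [IsNoetherianRing D] [IsAdicComplete (maximalIdeal B) B]
    {π : B →+* D} (hπ : Function.Surjective π) : IsAdicComplete (maximalIdeal D) D := by
  let _ := π.toAlgebra
  have comap_eq : (maximalIdeal D).comap (algebraMap B D) = maximalIdeal B :=
    eq_maximalIdeal (Ideal.comap_isMaximal_of_surjective _ hπ)
  have map_eq : (maximalIdeal B).map (algebraMap B D) = maximalIdeal D :=
    comap_eq ▸ Ideal.map_comap_of_surjective _ hπ _
  have : IsPrecomplete (maximalIdeal B) D := by
    refine AdicCompletion.of_surjective_iff.1 fun y => ?_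
    obtain ⟨b, hb⟩ := ((AdicCompletion.map_surjective (maximalIdeal B)
      (f := (Algebra.ofId B D).toLinearMap) hπ).comp
        (AdicCompletion.of_surjective (maximalIdeal B) B)) y
    exact ⟨π b, hb⟩
  have : IsPrecomplete (maximalIdeal D) D :=
    map_eq ▸ IsPrecomplete.map_algebraMap_iff.2 this
  exact { }

theorem IsCompleteLocalDomainOf.isCompleteLocalDomain {R D : Type u} [CommRing R]
    [IsNoetherianRing R] [CommRing D] [Algebra R D] (h : IsCompleteLocalDomainOf R D) :
    IsDomain D ∧ IsNoetherianRing D ∧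
      ∃ _ : IsLocalRing D, IsAdicComplete (maximalIdeal D) D := by
  obtain ⟨m, _, q, hq, e, -⟩ := h
  have : IsNoetherianRing (Localization.AtPrime m) :=
    IsLocalization.isNoetherianRing m.primeCompl _ inferInstance
  have : q.IsPrime := hq.1.1
  let π := e.symm.toRingHom.comp (Ideal.Quotient.mk q)
  have hπ : Function.Surjective π := e.symm.surjective.comp Ideal.Quotient.mk_surjective
  have isDomain : IsDomain D := e.toMulEquiv.isDomain _
  have isNoetherianRing : IsNoetherianRing D := isNoetherianRing_of_surjective _ _ π hπ
  have isLocalRing : IsLocalRing D := .of_surjective' π hπ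
  exact ⟨isDomain, isNoetherianRing, isLocalRing, isAdicComplete_maximalIdeal_of_surjective hπ⟩

lemma span_range_algebraMap_ne_top {D T : Type*} [CommRing D] [IsLocalRing D] [CommRing T]
    [Algebra D T] [Algebra.IsIntegral D T] (hinj : Function.Injective (algebraMap D T))
    {ι : Type*} {x : ι → D} (hx : ∀ i, x i ∈ maximalIdeal D) :
    Ideal.span (Set.range fun i => algebraMap D T (x i)) ≠ ⊤ := by
  obtain ⟨Q, hQ⟩ := RingHom.IsIntegral.comap_surjective (algebraMap_isIntegral_iff.2 ‹_›) hinj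
    ⟨maximalIdeal D, inferInstance⟩
  refine fun htop => Q.2.ne_top (top_le_iff.1 (htop ▸ Ideal.span_le.2 ?_))
  rintro _ ⟨i, rfl⟩
  change x i ∈ Q.asIdeal.comap (algebraMap D T)
  rw [show Q.asIdeal.comap (algebraMap D T) = maximalIdeal D from congrArg PrimeSpectrum.asIdeal hQ]
  exact hx i

end CompleteLocalDomains

section Robustness

open IsLocalRing

theorem FiltrationData.pow_le_of_algebraRat {D : Type u} {T : Type*} [CommRing D]
    [IsNoetherianRing D] [IsLocalRing D] [IsAdicComplete (maximalIdeal D) D] [Algebra ℚ D]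
    [CommRing T] [Algebra D T] [Algebra.IsIntegral D T]
    (hinj : Function.Injective (algebraMap D T)) {d t h : ℕ} (hd : d ≤ ringKrullDim D)
    {x : Fin d → D} (hx : (Ideal.span (Set.range x)).radical.IsMaximal)
    (H : FiltrationData (fun i => algebraMap D T (x i)) t h) : t ^ d ≤ h := by
  have : CharZero (ResidueField D) := algebraRat.charZero _
  obtain ⟨φ, hφX, hφ, φ_injective⟩ := exists_finite_injective_mvPowerSeries_ringHom hd hx
  let _ : Algebra (MvPowerSeries (Fin d) (ResidueField D)) T := ((algebraMap D T).comp φ).toAlgebra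
  have : Algebra.IsIntegral (MvPowerSeries (Fin d) (ResidueField D)) T :=
    ⟨hφ.to_isIntegral.trans φ (algebraMap D T) (algebraMap_isIntegral_iff.2 ‹_›)⟩
  refine pow_le_of_mvPowerSeries (hinj.comp φ_injective) ?_
  have algebraMap_X (i) : algebraMap (MvPowerSeries (Fin d) (ResidueField D)) T
      (MvPowerSeries.X i) = algebraMap D T (x i) := congrArg (algebraMap D T) (hφX i)
  simpa only [algebraMap_X] using H

theorem isRobustOver_of_isIntegral {K : Type*} {D T : Type u} [Field K] [CommRing D]
    [IsNoetherianRing D] [IsLocalRing D] [IsAdicComplete (maximalIdeal D) D] [CommRing T]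
    [Algebra D T] [Algebra.IsIntegral D T] (f : K →+* D)
    (hinj : Function.Injective (algebraMap D T)) :
    IsRobustOver D T := by
  refine fun d x hd hx => ⟨span_range_algebraMap_ne_top hinj fun i => ?_, fun t _ => ?_⟩
  · exact eq_maximalIdeal hx ▸ Ideal.le_radical (Ideal.subset_span ⟨i, rfl⟩)
  · refine le_sInf ?_
    rintro _ ⟨h, rfl, hH⟩
    obtain ⟨H⟩ := FiltrationData.nonempty_of_hasQLFiltration hH
    suffices t ^ d ≤ h by exact_mod_cast this
    obtain ⟨p, _⟩ := CharP.exists K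
    rcases CharP.char_is_prime_or_zero K p with hp | rfl
    · have : Fact p.Prime := ⟨hp⟩
      have : Nontrivial T := hinj.nontrivial
      have : CharP T p := charP_of_injective_ringHom ((algebraMap D T).comp f).injective p
      exact H.pow_le_of_charP p hinj hd.ge hx
    · have : CharZero K := CharP.charP_to_charZero K
      let _ : Algebra ℚ D := (f.comp (algebraMap ℚ K)).toAlgebra
      exact H.pow_le_of_algebraRat hinj hd.ge hx

theorem isRobustAlgebra_of_isIntegral {R S : Type u} [CommRing R] [IsNoetherianRing R]
    (hfield : ∃ K : Subring (R ⧸ nilradical R), IsField K) [CommRing S] [Algebra R S]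
    [Algebra.IsIntegral R S] (hinj : Function.Injective (algebraMap R S)) :
    IsRobustAlgebra R S := by
  intro D _ _ hD
  obtain ⟨_, _, _, _⟩ := hD.isCompleteLocalDomain
  obtain ⟨K, hK⟩ := hfield
  let _ : Field K := hK.toField
  have nilradical_le : nilradical R ≤ RingHom.ker (algebraMap R D) := fun a ha =>
    ((mem_nilradical.1 ha).map (algebraMap R D)).eq_zero
  exact isRobustOver_of_isIntegral
    ((Ideal.Quotient.lift (nilradical R) (algebraMap R D) nilradical_le).comp K.subtype)
    (injective_algebraMap_tensorProduct D hinj)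

lemma isForcingAlgebra_of_algebraMap_mem_map {R D T : Type u} [CommRing R] [CommRing D]
    [CommRing T] [Algebra R D] [Algebra D T] [Algebra R T] [IsScalarTower R D T] {I : Ideal R}
    {r : R} (hr : algebraMap R T r ∈ I.map (algebraMap R T)) :
    IsForcingAlgebra D (D ⊗[R] R) (Submodule.baseChange D I) (1 ⊗ₜ r) T := by
  let e : T ⊗[D] (D ⊗[R] R) := 1 ⊗ₜ (1 ⊗ₜ 1)
  have smul_e (a : R) : algebraMap R T a • e = 1 ⊗ₜ (1 ⊗ₜ a) := by
    rw [IsScalarTower.algebraMap_apply R D T, algebraMap_smul, ← TensorProduct.tmul_smul,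
      algebraMap_smul, ← TensorProduct.tmul_smul, smul_eq_mul, mul_one]
  let N : Submodule T (T ⊗[D] (D ⊗[R] R)) := (Submodule.baseChange D I).baseChange T
  have map_le : I.map (algebraMap R T) ≤ N.comap (LinearMap.toSpanSingleton T _ e) :=
    Ideal.map_le_iff_le_comap.2 fun a ha => by
      change algebraMap R T a • e ∈ N
      rw [smul_e]
      exact Submodule.tmul_mem_baseChange_of_mem _ (Submodule.tmul_mem_baseChange_of_mem _ ha)
  have smul_e_mem : algebraMap R T r • e ∈ N := map_le hr
  rwa [smul_e] at smul_e_mem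

lemma immediateRobustClosure_le_robustClosureCLD {D M : Type u} [CommRing D] [AddCommGroup M]
    [Module D M] (N : Submodule D M) :
    immediateRobustClosure D M N ≤ robustClosureCLD D M N :=
  le_iSup (fun j : ℕ => (immediateRobustClosure D M)^[j] N) 1

theorem IsRobustAlgebra.memRobustClosure {R S : Type u} [CommRing R] [CommRing S] [Algebra R S]
    (hS : IsRobustAlgebra R S) {I : Ideal R} {r : R}
    (hr : algebraMap R S r ∈ I.map (algebraMap R S)) : MemRobustClosure R R I r := by
  intro D _ _ hD
  let ι : S →ₐ[R] D ⊗[R] S := Algebra.TensorProduct.includeRight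
  have mem_map : algebraMap R (D ⊗[R] S) r ∈ I.map (algebraMap R (D ⊗[R] S)) := by
    rw [← ι.commutes, ← ι.comp_algebraMap, ← Ideal.map_map]
    exact Ideal.mem_map_of_mem _ hr
  exact immediateRobustClosure_le_robustClosureCLD _ (Submodule.mem_sup_right
    (Submodule.subset_span ⟨D ⊗[R] S, inferInstance, inferInstance,
      isForcingAlgebra_of_algebraMap_mem_map mem_map, hS D hD⟩))

theorem moduleFinite_extension_isRobust_general {R S : Type u} [CommRing R] [IsNoetherianRing R]
    (hfield : ∃ K : Subring (R ⧸ nilradical R), IsField K) [CommRing S] [Algebra R S]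
    [Algebra.IsIntegral R S] (hinj : Function.Injective (algebraMap R S)) :
    IsRobustAlgebra R S ∧
    ∀ (I : Ideal R) (r : R), algebraMap R S r ∈ I.map (algebraMap R S) →
      MemRobustClosure R R I r :=
  have hS := isRobustAlgebra_of_isIntegral hfield hinj
  ⟨hS, fun _ _ => hS.memRobustClosure⟩

end Robustness

/-- If `R` is a Noetherian ring such that `R/√(0)` contains a field,
then every module-finite extension `S` of `R` is a robust `R`-algebra; consequently
`IS ∩ R` is contained in the robust closure of `I` for every ideal `I` of `R`. -/
theorem moduleFinite_extension_isRobust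
    (R : Type u) [CommRing R] [IsNoetherianRing R]
    (hfield : ∃ K : Subring (R ⧸ nilradical R), IsField K)
    (S : Type u) [CommRing S] [Algebra R S] [Module.Finite R S]
    (hinj : Function.Injective (algebraMap R S)) :
    IsRobustAlgebra R S ∧
    ∀ (I : Ideal R) (r : R), algebraMap R S r ∈ I.map (algebraMap R S) →
      MemRobustClosure R R I r :=
  moduleFinite_extension_isRobust_general hfield hinj
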